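/- Carleson estimate and boundary Harnack inequality for solutions of the homogeneous extremal inequalities. For every integer n ≥ 2, reals 0 < λ ≤ Λ, exponent q > n, and K > 0, there exist constants c₁, c₂, c₃ > 0 such that the following holds. Let b : B₂⁺ → ℝ be continuous with b ≥ 0 and ‖b‖_{L^q(B₂⁺)} ≤ K. Let u be continuous on B₂⁺ ∪ B₂⁰ and C² on B₂⁺ with 𝓜⁻(D²u) − b|Du| ≤ 0 ≤ 𝓜⁺(D²u) + b|Du| in B₂⁺, u > 0 in B₂⁺, and u = 0 on B₂⁰. Then (i) inf_{x ∈ B₁⁺} u(x)/x_n ≥ c₁·u(0,…,0,1/2) and c₁·u(0,…,0,1/2) ≥ c₂·sup_{x ∈ B₁⁺} u(x); and (ii) if v is another function continuous on B₂⁺ ∪ B₂⁰ and C² on B₂⁺ with 𝓜⁻(D²v) − b|Dv| ≤ 0 ≤ 𝓜⁺(D²v) + b|Dv| in B₂⁺, v > 0 in B₂⁺, and v = 0 on B₂⁰, then inf_{x ∈ B₁⁺} u(x)/v(x) ≥ c₃·sup_{x ∈ B₁⁺} u(x)/v(x). -/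

import Mathlib

open MeasureTheory
open scoped ENNReal

/-- The Pucci minimal extremal operator `𝓜⁻(M)` with ellipticity constants `lam ≤ Lam`:
the infimum of `tr(A*M)` over symmetric matrices `A` with `lam•I ≤ A ≤ Lam•I`. -/
noncomputable def pucciMinus (n : ℕ) (lam Lam : ℝ) (M : Matrix (Fin n) (Fin n) ℝ) : ℝ :=
  sInf { t : ℝ | ∃ A : Matrix (Fin n) (Fin n) ℝ, A.IsSymm ∧
    (A - lam • (1 : Matrix (Fin n) (Fin n) ℝ)).PosSemidef ∧
    (Lam • (1 : Matrix (Fin n) (Fin n) ℝ) - A).PosSemidef ∧ t = (A * M).trace }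

/-- The Pucci maximal extremal operator `𝓜⁺(M)`. -/
noncomputable def pucciPlus (n : ℕ) (lam Lam : ℝ) (M : Matrix (Fin n) (Fin n) ℝ) : ℝ :=
  sSup { t : ℝ | ∃ A : Matrix (Fin n) (Fin n) ℝ, A.IsSymm ∧
    (A - lam • (1 : Matrix (Fin n) (Fin n) ℝ)).PosSemidef ∧
    (Lam • (1 : Matrix (Fin n) (Fin n) ℝ) - A).PosSemidef ∧ t = (A * M).trace }

/-- The Hessian matrix `D²u(x)` of `u` at `x`. -/
noncomputable def hess (n : ℕ) (u : EuclideanSpace ℝ (Fin n) → ℝ)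
    (x : EuclideanSpace ℝ (Fin n)) : Matrix (Fin n) (Fin n) ℝ :=
  fun i j => fderiv ℝ (fun y => fderiv ℝ u y (EuclideanSpace.single j (1 : ℝ))) x
    (EuclideanSpace.single i (1 : ℝ))

/-- The euclidean norm `|Du(x)|` of the gradient of `u` at `x`. -/
noncomputable def gradNorm (n : ℕ) (u : EuclideanSpace ℝ (Fin n) → ℝ)
    (x : EuclideanSpace ℝ (Fin n)) : ℝ := ‖fderiv ℝ u x‖

/-- The `L^p` norm `(∫_E |g|^p)^(1/p)`, as a Lebesgue integral valued in `[0,∞]`. -/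
noncomputable def LpNormE (n : ℕ) (p : ℝ) (g : EuclideanSpace ℝ (Fin n) → ℝ)
    (E : Set (EuclideanSpace ℝ (Fin n))) : ℝ≥0∞ :=
  (∫⁻ x in E, ENNReal.ofReal (|g x| ^ p)) ^ (1 / p)

/-- The last (`n`-th) coordinate `x_n` of a point of `ℝⁿ`. -/
def lastC (n : ℕ) (hn : 1 ≤ n) (x : EuclideanSpace ℝ (Fin n)) : ℝ := x ⟨n - 1, by omega⟩

/-- The open half-ball `B_R⁺ = {|x| < R, x_n > 0}`. -/
def halfBall (n : ℕ) (hn : 1 ≤ n) (R : ℝ) : Set (EuclideanSpace ℝ (Fin n)) :=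
  {x | ‖x‖ < R ∧ 0 < lastC n hn x}

/-- The flat boundary part `B_R⁰ = {|x| ≤ R, x_n = 0}`. -/
def flatB (n : ℕ) (hn : 1 ≤ n) (R : ℝ) : Set (EuclideanSpace ℝ (Fin n)) :=
  {x | ‖x‖ ≤ R ∧ lastC n hn x = 0}

/-- The norm `‖g‖_{L^{p,q}(B_R⁺)} = ‖g‖_{L^p(B_R⁺)} + ‖g‖_{L^q(B_R⁺ ∩ {x_n < d0})}`. -/
noncomputable def LpqNormHB (n : ℕ) (hn : 1 ≤ n) (p q d0 R : ℝ)
    (g : EuclideanSpace ℝ (Fin n) → ℝ) : ℝ≥0∞ :=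
  LpNormE n p g (halfBall n hn R) +
    LpNormE n q g {x ∈ halfBall n hn R | lastC n hn x < d0}

/-- The open cube `Q_ρ` of side `ρ` centered at `(0,…,0,ρ/2)`. -/
def cubeQ (n : ℕ) (hn : 1 ≤ n) (ρ : ℝ) : Set (EuclideanSpace ℝ (Fin n)) :=
  {x | (∀ i : Fin n, i.1 ≠ n - 1 → |x i| < ρ / 2) ∧ 0 < lastC n hn x ∧ lastC n hn x < ρ}

/-- The norm `‖g‖_{L^{p,q}(Q₂)} = ‖g‖_{L^p(Q₂)} + ‖g‖_{L^q(Q₂ ∩ {x_n < d0})}`. -/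
noncomputable def LpqNormQ (n : ℕ) (hn : 1 ≤ n) (p q d0 : ℝ)
    (g : EuclideanSpace ℝ (Fin n) → ℝ) : ℝ≥0∞ :=
  LpNormE n p g (cubeQ n hn 2) +
    LpNormE n q g {x ∈ cubeQ n hn 2 | lastC n hn x < d0}


namespace CBH
open Matrix

/-- Admissible coefficient matrices. -/
def Adm (n : ℕ) (lam Lam : ℝ) (A : Matrix (Fin n) (Fin n) ℝ) : Prop :=
  A.IsSymm ∧ (A - lam • (1 : Matrix (Fin n) (Fin n) ℝ)).PosSemidef ∧
    (Lam • (1 : Matrix (Fin n) (Fin n) ℝ) - A).PosSemidef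

lemma trace_mul_nonneg {n : ℕ} {A B : Matrix (Fin n) (Fin n) ℝ} (hA : A.PosSemidef)
    (hB : B.PosSemidef) : 0 ≤ (A * B).trace := by
  open scoped MatrixOrder in
  have h0 : 0 ≤ A := Matrix.nonneg_iff_posSemidef.2 hA
  open scoped MatrixOrder in
  rw [StarOrderedRing.nonneg_iff] at h0
  induction h0 using AddSubmonoid.closure_induction with
  | mem x hx =>
    obtain ⟨s, rfl⟩ := hx
    have : (star s * s * B).trace = (s * B * sᴴ).trace := by
      rw [Matrix.mul_assoc, Matrix.trace_mul_comm, star_eq_conjTranspose]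
    show 0 ≤ (star s * s * B).trace
    rw [this]
    exact (hB.mul_mul_conjTranspose_same s).trace_nonneg
  | zero => simp
  | add x y hx hy h1 h2 =>
    open scoped MatrixOrder in
    rw [Matrix.add_mul, Matrix.trace_add]
    have hx' : x.PosSemidef :=
      Matrix.nonneg_iff_posSemidef.1 (StarOrderedRing.nonneg_iff.2 hx)
    open scoped MatrixOrder in
    have hy' : y.PosSemidef :=
      Matrix.nonneg_iff_posSemidef.1 (StarOrderedRing.nonneg_iff.2 hy)
    exact add_nonneg (h1 hx') (h2 hy')

lemma Adm.trace_le {n : ℕ} {lam Lam : ℝ} {A : Matrix (Fin n) (Fin n) ℝ} (h : Adm n lam Lam A) :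
    A.trace ≤ n * Lam := by
  have := h.2.2.trace_nonneg
  simp only [Matrix.trace_sub, Matrix.trace_smul, Matrix.trace_one, Fintype.card_fin,
    smul_eq_mul] at this
  linarith

lemma Adm.mul_trace {n : ℕ} {lam Lam : ℝ} {A H : Matrix (Fin n) (Fin n) ℝ} (h : Adm n lam Lam A)
    (hH : H.PosSemidef) : lam * H.trace ≤ (A * H).trace := by
  have := trace_mul_nonneg h.2.1 hH
  simp only [Matrix.sub_mul, Matrix.trace_sub, Matrix.smul_mul, Matrix.one_mul, Matrix.trace_smul,
    smul_eq_mul] at this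
  linarith

lemma adm_self {n : ℕ} {lam Lam : ℝ} (h : lam ≤ Lam) :
    Adm n lam Lam (lam • (1 : Matrix (Fin n) (Fin n) ℝ)) := by
  refine ⟨?_, ?_, ?_⟩
  · simp [Matrix.IsSymm]
  · simpa using Matrix.PosSemidef.zero
  · rw [← sub_smul]
    exact Matrix.PosSemidef.one.smul (sub_nonneg.2 h)

lemma det_le {n : ℕ} {H : Matrix (Fin n) (Fin n) ℝ} (hH : H.PosSemidef) :
    |H.det| ≤ H.trace ^ n := by
  rw [abs_of_nonneg hH.det_nonneg]
  have h1 := hH.isHermitian.det_eq_prod_eigenvalues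
  have h2 := hH.isHermitian.trace_eq_sum_eigenvalues
  simp only [RCLike.ofReal_real_eq_id, id] at h1 h2
  rw [h1]
  calc ∏ i, hH.isHermitian.eigenvalues i ≤ ∏ _i : Fin n, H.trace := by
        apply Finset.prod_le_prod
        · intro i _; exact hH.eigenvalues_nonneg i
        · intro i _
          rw [h2]
          exact Finset.single_le_sum (f := hH.isHermitian.eigenvalues)
            (fun j _ => hH.eigenvalues_nonneg j) (Finset.mem_univ i)
    _ = _ := by simp

variable {n : ℕ}

lemma pucciMinus_ex {lam Lam : ℝ} (h : lam ≤ Lam) {M : Matrix (Fin n) (Fin n) ℝ} {g η : ℝ}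
    (hM : pucciMinus n lam Lam M ≤ g) (hη : 0 < η) :
    ∃ A, Adm n lam Lam A ∧ (A * M).trace ≤ g + η := by
  have : pucciMinus n lam Lam M < g + η := by linarith
  unfold pucciMinus at this
  obtain ⟨t, ⟨A, h1, h2, h3, rfl⟩, ht⟩ := exists_lt_of_csInf_lt
    (by have := adm_self (n := n) h
        exact ⟨_, _, this.1, this.2.1, this.2.2, rfl⟩) this
  exact ⟨A, ⟨h1, h2, h3⟩, ht.le⟩

lemma pucciPlus_ex {lam Lam : ℝ} (h : lam ≤ Lam) {M : Matrix (Fin n) (Fin n) ℝ} {g η : ℝ}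
    (hM : 0 ≤ pucciPlus n lam Lam M + g) (hη : 0 < η) :
    ∃ A, Adm n lam Lam A ∧ (A * (-M)).trace ≤ g + η := by
  have : -g - η < pucciPlus n lam Lam M := by linarith
  unfold pucciPlus at this
  obtain ⟨t, ⟨A, h1, h2, h3, rfl⟩, ht⟩ := exists_lt_of_lt_csSup
    (by have := adm_self (n := n) h
        exact ⟨_, _, this.1, this.2.1, this.2.2, rfl⟩) this
  refine ⟨A, ⟨h1, h2, h3⟩, ?_⟩
  rw [Matrix.mul_neg, Matrix.trace_neg]; linarith

/-! ### Hessians -/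

lemma diff_fderiv {w : EuclideanSpace ℝ (Fin n) → ℝ} {x : EuclideanSpace ℝ (Fin n)}
    (hw : ContDiffAt ℝ 2 w x) : DifferentiableAt ℝ (fderiv ℝ w) x :=
  (hw.fderiv_right (m := 1) (by norm_num)).differentiableAt (by norm_num)

lemma hess_apply {w : EuclideanSpace ℝ (Fin n) → ℝ} {x : EuclideanSpace ℝ (Fin n)}
    (hw : ContDiffAt ℝ 2 w x) (i j : Fin n) :
    hess n w x i j = fderiv ℝ (fderiv ℝ w) x (EuclideanSpace.single i 1)
      (EuclideanSpace.single j 1) := by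
  unfold hess
  rw [fderiv_clm_apply (diff_fderiv hw) (differentiableAt_const _)]
  simp

lemma hess_symm {w : EuclideanSpace ℝ (Fin n) → ℝ} {x : EuclideanSpace ℝ (Fin n)}
    (hw : ContDiffAt ℝ 2 w x) : (hess n w x).IsHermitian := by
  ext i j
  rw [Matrix.conjTranspose_apply, hess_apply hw, hess_apply hw]
  have := hw.isSymmSndFDerivAt (by simp)
  simpa using this _ _

lemma hess_quad {w : EuclideanSpace ℝ (Fin n) → ℝ} {x : EuclideanSpace ℝ (Fin n)}
    (hw : ContDiffAt ℝ 2 w x) (v : EuclideanSpace ℝ (Fin n)) :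
    v.ofLp ⬝ᵥ (hess n w x *ᵥ v.ofLp) = fderiv ℝ (fderiv ℝ w) x v v := by
  have hv : v = ∑ i, v i • EuclideanSpace.single i (1 : ℝ) := by
    ext j; simp [Finset.sum_apply, Pi.single_apply]
  conv_rhs => rw [hv]
  simp only [map_sum, map_smul, _root_.sum_apply, _root_.smul_apply,
    smul_eq_mul, dotProduct, mulVec, Finset.mul_sum, hess_apply hw]
  rw [Finset.sum_comm]
  refine Finset.sum_congr rfl fun i _ => Finset.sum_congr rfl fun j _ => ?_
  ring

lemma snd_nonneg_of_min {w : EuclideanSpace ℝ (Fin n) → ℝ} {x : EuclideanSpace ℝ (Fin n)}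
    (hw : ContDiffAt ℝ 2 w x) (hm : IsLocalMin w x) (v : EuclideanSpace ℝ (Fin n)) :
    0 ≤ fderiv ℝ (fderiv ℝ w) x v v := by
  set g : ℝ → ℝ := fun t => w (x + t • v) with hg
  have hline : ∀ t : ℝ, HasDerivAt (fun t : ℝ => x + t • v) v t := fun t => by
    simpa using ((hasDerivAt_id t).smul_const v).const_add x
  have hcont : ContinuousAt (fun t : ℝ => x + t • v) 0 := (hline 0).continuousAt
  have hev : ∀ᶠ y in nhds x, ContDiffAt ℝ 2 w y := hw.eventually (by simp)
  have hev' : ∀ᶠ t in nhds (0 : ℝ), ContDiffAt ℝ 2 w (x + t • v) := by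
    apply hcont.eventually; simpa using hev
  have hd : ∀ᶠ t in nhds (0 : ℝ), deriv g t = fderiv ℝ w (x + t • v) v := by
    filter_upwards [hev'] with t ht
    exact ((ht.differentiableAt (by norm_num)).hasFDerivAt.comp_hasDerivAt t (hline t)).deriv
  have hx0 : x + (0 : ℝ) • v = x := by simp
  have hd2 : deriv (deriv g) 0 = fderiv ℝ (fderiv ℝ w) x v v := by
    rw [Filter.EventuallyEq.deriv_eq hd]
    have h1 : HasFDerivAt (fderiv ℝ w) (fderiv ℝ (fderiv ℝ w) x) (x + (0:ℝ) • v) := by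
      rw [hx0]; exact (diff_fderiv hw).hasFDerivAt
    have h2 : HasDerivAt (fun t : ℝ => fderiv ℝ w (x + t • v)) (fderiv ℝ (fderiv ℝ w) x v) 0 :=
      h1.comp_hasDerivAt 0 (hline 0)
    have h3 : HasDerivAt (fun t : ℝ => fderiv ℝ w (x + t • v) v)
        (fderiv ℝ (fderiv ℝ w) x v v) 0 :=
      (ContinuousLinearMap.apply ℝ ℝ v).hasFDerivAt.comp_hasDerivAt (0 : ℝ) h2
    exact h3.deriv
  have hgm : IsLocalMin g 0 := by
    have : ∀ᶠ t in nhds (0 : ℝ), w x ≤ w (x + t • v) := by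
      refine hcont.eventually (p := fun y => w x ≤ w y) ?_
      simpa [IsLocalMin, IsMinFilter] using hm
    simpa [IsLocalMin, IsMinFilter, hg] using this
  have hgc : ContinuousAt g 0 := by
    have : ContinuousAt w (x + (0:ℝ) • v) := by rw [hx0]; exact hw.continuousAt
    exact ContinuousAt.comp (f := fun t : ℝ => x + t • v) (g := w) this hcont
  by_contra hneg
  push Not at hneg
  rw [← hd2] at hneg
  have hmax := isLocalMax_of_deriv_deriv_neg hneg hgm.deriv_eq_zero hgc
  have hconst : g =ᶠ[nhds 0] fun _ => g 0 := by
    filter_upwards [hmax, hgm] with t h1 h2 using le_antisymm h1 h2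
  have : deriv (deriv g) 0 = 0 := by
    rw [hconst.deriv.deriv_eq]; simp
  linarith

lemma hess_psd {w : EuclideanSpace ℝ (Fin n) → ℝ} {x : EuclideanSpace ℝ (Fin n)}
    (hw : ContDiffAt ℝ 2 w x) (hm : ∀ v, 0 ≤ fderiv ℝ (fderiv ℝ w) x v v) :
    (hess n w x).PosSemidef := by
  rw [Matrix.posSemidef_iff_dotProduct_mulVec]
  refine ⟨hess_symm hw, fun v => ?_⟩
  have := hess_quad hw (WithLp.toLp 2 v)
  simp only [star_trivial]
  simpa [this] using this ▸ hm (WithLp.toLp 2 v)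

lemma hess_add {w φ : EuclideanSpace ℝ (Fin n) → ℝ} {x : EuclideanSpace ℝ (Fin n)}
    (hw : ContDiffAt ℝ 2 w x) (hφ : ContDiffAt ℝ 2 φ x) :
    hess n (fun y => w y + φ y) x = hess n w x + hess n φ x := by
  ext i j
  rw [Matrix.add_apply, hess_apply (hw.add hφ), hess_apply hw, hess_apply hφ]
  have : fderiv ℝ (fun y => w y + φ y) =ᶠ[nhds x] fun y => fderiv ℝ w y + fderiv ℝ φ y := by
    filter_upwards [hw.eventually (by simp), hφ.eventually (by simp)] with y h1 h2
    exact fderiv_fun_add (h1.differentiableAt (by norm_num)) (h2.differentiableAt (by norm_num))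
  rw [this.fderiv_eq, fderiv_fun_add (diff_fderiv hw) (diff_fderiv hφ)]
  rfl

lemma hess_const_mul {w : EuclideanSpace ℝ (Fin n) → ℝ} {x : EuclideanSpace ℝ (Fin n)}
    (c : ℝ) (hw : ContDiffAt ℝ 2 w x) :
    hess n (fun y => c * w y) x = c • hess n w x := by
  ext i j
  rw [Matrix.smul_apply, hess_apply (contDiffAt_const.mul hw), hess_apply hw]
  have : fderiv ℝ (fun y => c * w y) =ᶠ[nhds x] fun y => c • fderiv ℝ w y := by
    filter_upwards [hw.eventually (by simp)] with y h1
    exact fderiv_const_mul (h1.differentiableAt (by norm_num)) c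
  rw [this.fderiv_eq, fderiv_fun_const_smul (diff_fderiv hw)]
  rfl

lemma hess_congr {w φ : EuclideanSpace ℝ (Fin n) → ℝ} {x : EuclideanSpace ℝ (Fin n)}
    (h : w =ᶠ[nhds x] φ) : hess n w x = hess n φ x := by
  ext i j
  unfold hess
  have : (fun y => fderiv ℝ w y (EuclideanSpace.single j (1 : ℝ))) =ᶠ[nhds x]
      (fun y => fderiv ℝ φ y (EuclideanSpace.single j (1 : ℝ))) := by
    filter_upwards [h.fderiv (𝕜 := ℝ)] with y hy
    rw [hy]
  rw [this.fderiv_eq]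

/-- `w` is `C²` at `x` and satisfies `𝓜⁻(D²w) ≤ b(|Dw|+β) + α` at `x`. -/
def Sup (n : ℕ) (lam Lam b β α : ℝ) (w : EuclideanSpace ℝ (Fin n) → ℝ)
    (x : EuclideanSpace ℝ (Fin n)) : Prop :=
  ContDiffAt ℝ 2 w x ∧ ∀ η > 0, ∃ A, Adm n lam Lam A ∧
    (A * hess n w x).trace ≤ b * (‖fderiv ℝ w x‖ + β) + α + η

lemma Sup.congr {lam Lam b β α : ℝ} {w φ : EuclideanSpace ℝ (Fin n) → ℝ}
    {x : EuclideanSpace ℝ (Fin n)} (h : Sup n lam Lam b β α w x) (he : w =ᶠ[nhds x] φ) :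
    Sup n lam Lam b β α φ x := by
  refine ⟨h.1.congr_of_eventuallyEq he.symm, ?_⟩
  rw [← hess_congr he, ← he.fderiv_eq]
  exact h.2

lemma Sup.add {lam Lam b β α β' α' : ℝ} {w φ : EuclideanSpace ℝ (Fin n) → ℝ}
    {x : EuclideanSpace ℝ (Fin n)} (h : Sup n lam Lam b β α w x) (hb : 0 ≤ b)
    (hφ : ContDiffAt ℝ 2 φ x) (h1 : ‖fderiv ℝ φ x‖ ≤ β')
    (h2 : ∀ A, Adm n lam Lam A → (A * hess n φ x).trace ≤ α') :
    Sup n lam Lam b (β + β') (α + α') (fun y => w y + φ y) x := by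
  refine ⟨h.1.add hφ, fun η hη => ?_⟩
  obtain ⟨A, hA, hAt⟩ := h.2 η hη
  refine ⟨A, hA, ?_⟩
  rw [hess_add h.1 hφ, Matrix.mul_add, Matrix.trace_add]
  have h3 := h2 A hA
  have h4 : ‖fderiv ℝ w x‖ ≤ ‖fderiv ℝ (fun y => w y + φ y) x‖ + β' := by
    rw [fderiv_fun_add (h.1.differentiableAt (by norm_num)) (hφ.differentiableAt (by norm_num))]
    have := norm_sub_le (fderiv ℝ w x + fderiv ℝ φ x) (fderiv ℝ φ x)
    rw [add_sub_cancel_right] at this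
    linarith
  have h5 := mul_le_mul_of_nonneg_left h4 hb
  nlinarith

lemma Sup.mono {lam Lam b β α β' α' : ℝ} {w : EuclideanSpace ℝ (Fin n) → ℝ}
    {x : EuclideanSpace ℝ (Fin n)} (h : Sup n lam Lam b β α w x) (hb : 0 ≤ b)
    (h1 : β ≤ β') (h2 : α ≤ α') : Sup n lam Lam b β' α' w x := by
  refine ⟨h.1, fun η hη => ?_⟩
  obtain ⟨A, hA, hAt⟩ := h.2 η hη
  refine ⟨A, hA, hAt.trans ?_⟩
  have := mul_le_mul_of_nonneg_left h1 hb
  nlinarith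

lemma Sup.const_mul {lam Lam b c : ℝ} {w : EuclideanSpace ℝ (Fin n) → ℝ}
    {x : EuclideanSpace ℝ (Fin n)} (h : Sup n lam Lam b 0 0 w x) (hc : 0 < c) :
    Sup n lam Lam b 0 0 (fun y => c * w y) x := by
  refine ⟨contDiffAt_const.mul h.1, fun η hη => ?_⟩
  obtain ⟨A, hA, hAt⟩ := h.2 (η / c) (by positivity)
  refine ⟨A, hA, ?_⟩
  rw [hess_const_mul c h.1, fderiv_const_mul (h.1.differentiableAt (by norm_num)) c, norm_smul,
    Matrix.mul_smul, Matrix.trace_smul, smul_eq_mul, Real.norm_eq_abs, abs_of_pos hc]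
  have := mul_le_mul_of_nonneg_left hAt hc.le
  have e : c * (η / c) = η := by field_simp
  nlinarith

/-- Trace bound at a contact point. -/
lemma Sup.trace_le {lam Lam b β α : ℝ} {w : EuclideanSpace ℝ (Fin n) → ℝ}
    {x : EuclideanSpace ℝ (Fin n)} (h : Sup n lam Lam b β α w x)
    (hm : ∀ v, 0 ≤ fderiv ℝ (fderiv ℝ w) x v v) :
    lam * (hess n w x).trace ≤ b * (‖fderiv ℝ w x‖ + β) + α := by
  apply le_of_forall_pos_le_add
  intro η hη
  obtain ⟨A, hA, hAt⟩ := h.2 η hη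
  exact (hA.mul_trace (hess_psd h.1 hm)).trans hAt

end CBH

namespace CBH
open Matrix
variable {n : ℕ}

lemma add_pow_le_two {x y : ℝ} (hx : 0 ≤ x) (hy : 0 ≤ y) (n : ℕ) :
    (x + y) ^ n ≤ 2 ^ n * (x ^ n + y ^ n) := by
  have h1 : x + y ≤ 2 * max x y := by
    have := le_max_left x y; have := le_max_right x y; linarith
  calc (x + y) ^ n ≤ (2 * max x y) ^ n := pow_le_pow_left₀ (by positivity) h1 n
    _ = 2 ^ n * (max x y) ^ n := mul_pow _ _ _
    _ ≤ _ := by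
      gcongr
      rcases max_choice x y with h | h <;> rw [h]
      · linarith [pow_nonneg hy n]
      · linarith [pow_nonneg hx n]

/-- The Riesz map as a real linear map. -/
noncomputable def toE : StrongDual ℝ (EuclideanSpace ℝ (Fin n)) →L[ℝ] EuclideanSpace ℝ (Fin n) :=
  LinearMap.toContinuousLinearMap
    { toFun := fun f => (InnerProductSpace.toDual ℝ (EuclideanSpace ℝ (Fin n))).symm f
      map_add' := fun f g => map_add _ f g
      map_smul' := fun c f => by simp }

lemma toE_apply (f : StrongDual ℝ (EuclideanSpace ℝ (Fin n))) :
    toE f = (InnerProductSpace.toDual ℝ (EuclideanSpace ℝ (Fin n))).symm f := rfl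

/-- The gradient map. -/
noncomputable def gradMap (w : EuclideanSpace ℝ (Fin n) → ℝ) (x : EuclideanSpace ℝ (Fin n)) :
    EuclideanSpace ℝ (Fin n) :=
  toE (fderiv ℝ w x)

/-- The derivative of the gradient map. -/
noncomputable def gradMap' (w : EuclideanSpace ℝ (Fin n) → ℝ) (x : EuclideanSpace ℝ (Fin n)) :
    EuclideanSpace ℝ (Fin n) →L[ℝ] EuclideanSpace ℝ (Fin n) :=
  toE.comp (fderiv ℝ (fderiv ℝ w) x)

lemma gradMap_hasFDerivAt {w : EuclideanSpace ℝ (Fin n) → ℝ} {x : EuclideanSpace ℝ (Fin n)}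
    (hw : ContDiffAt ℝ 2 w x) : HasFDerivAt (gradMap w) (gradMap' w x) x := by
  unfold gradMap gradMap'
  exact (toE.hasFDerivAt).comp x (diff_fderiv hw).hasFDerivAt

lemma gradMap'_det {w : EuclideanSpace ℝ (Fin n) → ℝ} {x : EuclideanSpace ℝ (Fin n)}
    (hw : ContDiffAt ℝ 2 w x) : (gradMap' w x).det = (hess n w x).det := by
  have h1 : (gradMap' w x).det = LinearMap.det (gradMap' w x : EuclideanSpace ℝ (Fin n) →ₗ[ℝ]
    EuclideanSpace ℝ (Fin n)) := rfl
  rw [h1, ← LinearMap.det_toMatrix (EuclideanSpace.basisFun (Fin n) ℝ).toBasis,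
    ← Matrix.det_transpose]
  congr 1
  ext i j
  rw [Matrix.transpose_apply, LinearMap.toMatrix_apply, hess_apply hw]
  simp only [OrthonormalBasis.coe_toBasis, OrthonormalBasis.coe_toBasis_repr_apply,
    EuclideanSpace.basisFun_apply, EuclideanSpace.basisFun_repr]
  have h2 : ∀ (f : StrongDual ℝ (EuclideanSpace ℝ (Fin n))),
      (toE f) j = f (EuclideanSpace.single j 1) := by
    intro f
    rw [← InnerProductSpace.toDual_symm_apply (𝕜 := ℝ) (x := EuclideanSpace.single j 1) (y := f),
      EuclideanSpace.inner_single_right, toE_apply]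
    simp only [starRingEnd_apply, star_trivial, one_mul]
  exact h2 _

lemma norm_gradMap (w : EuclideanSpace ℝ (Fin n) → ℝ) (x : EuclideanSpace ℝ (Fin n)) :
    ‖gradMap w x‖ = ‖fderiv ℝ w x‖ := by
  unfold gradMap
  rw [toE_apply]
  exact LinearIsometryEquiv.norm_map _ _

lemma contact {K : Set (EuclideanSpace ℝ (Fin n))} (hK : IsCompact K)
    {w : EuclideanSpace ℝ (Fin n) → ℝ} (hw : ContinuousOn w K) {d m : ℝ}
    (hd : ∀ x ∈ K, ∀ y ∈ K, ‖x - y‖ ≤ d) (hd0 : 0 < d)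
    (hdrInt : ∀ x ∈ K, w x < 0 → x ∈ interior K ∧ ContDiffAt ℝ 2 w x)
    {x0 : EuclideanSpace ℝ (Fin n)} (hx0 : x0 ∈ K) (hwx : w x0 ≤ -m)
    {p : EuclideanSpace ℝ (Fin n)} (hp : ‖p‖ < m / d) :
    ∃ x ∈ interior K, w x < 0 ∧ gradMap w x = p ∧ ∀ v, 0 ≤ fderiv ℝ (fderiv ℝ w) x v v := by
  set P : StrongDual ℝ (EuclideanSpace ℝ (Fin n)) :=
    InnerProductSpace.toDual ℝ (EuclideanSpace ℝ (Fin n)) p with hP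
  have hPn : ‖P‖ = ‖p‖ := LinearIsometryEquiv.norm_map _ _
  obtain ⟨x, hxK, hxm⟩ := hK.exists_isMinOn ⟨x0, hx0⟩
    (f := fun y => w y - P y) (hw.sub P.continuous.continuousOn)
  have h1 : w x - P x ≤ w x0 - P x0 := hxm hx0
  have h2 : P (x - x0) ≤ ‖p‖ * d := by
    calc P (x - x0) ≤ ‖P (x - x0)‖ := le_abs_self _
      _ ≤ ‖P‖ * ‖x - x0‖ := P.le_opNorm _
      _ ≤ ‖p‖ * d := by
        rw [hPn]; exact mul_le_mul_of_nonneg_left (hd x hxK x0 hx0) (norm_nonneg _)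
  have h3 : ‖p‖ * d < m := by rwa [lt_div_iff₀ hd0] at hp
  rw [map_sub] at h2
  have hneg : w x < 0 := by linarith
  obtain ⟨hxi, hC⟩ := hdrInt x hxK hneg
  have hmin : IsLocalMin (fun y => w y - P y) x :=
    hxm.isLocalMin (mem_interior_iff_mem_nhds.1 hxi)
  have hC' : ContDiffAt ℝ 2 (fun y => w y - P y) x := hC.sub P.contDiff.contDiffAt
  have hfd : fderiv ℝ (fun y => w y - P y) =ᶠ[nhds x] fun y => fderiv ℝ w y - P := by
    filter_upwards [hC.eventually (by simp)] with y h1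
    rw [fderiv_fun_sub (h1.differentiableAt (by norm_num)) P.differentiableAt,
      ContinuousLinearMap.fderiv]
  refine ⟨x, hxi, hneg, ?_, ?_⟩
  · have := hmin.fderiv_eq_zero
    rw [hfd.eq_of_nhds, sub_eq_zero] at this
    unfold gradMap
    rw [this, hP, toE_apply, LinearIsometryEquiv.symm_apply_apply]
  · intro v
    have := snd_nonneg_of_min hC' hmin v
    rw [hfd.fderiv_eq, fderiv_sub_const] at this
    exact this

lemma abp (n : ℕ) {lam Lam : ℝ} (hlam : 0 < lam) : ∃ C > 0, ∃ ε > 0,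
    ∀ (K S : Set (EuclideanSpace ℝ (Fin n))) (w b : EuclideanSpace ℝ (Fin n) → ℝ)
      (d m α β B : ℝ) (x0 : EuclideanSpace ℝ (Fin n)),
      IsCompact K → MeasurableSet S → ContinuousOn w K → 0 < d → 0 < m → 0 ≤ α → 0 ≤ β →
      0 ≤ B → B ≤ ε →
      (∀ x ∈ K, ∀ y ∈ K, ‖x - y‖ ≤ d) →
      (∀ x ∈ K, w x < 0 → x ∈ interior K ∧ 0 ≤ b x ∧
        Sup n lam Lam (b x) β (S.indicator (fun _ => α) x) w x) →
      (∫⁻ x in {x | x ∈ K ∧ w x < 0}, ENNReal.ofReal (b x ^ n)) ≤ ENNReal.ofReal B →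
      x0 ∈ K → w x0 ≤ -m →
      (m / d) ^ n ≤ C * (α ^ n * (volume (S ∩ {x | x ∈ K ∧ w x < 0})).toReal + β ^ n * B) := by
  set ω : ℝ := (volume (Metric.ball (0 : EuclideanSpace ℝ (Fin n)) 1)).toReal with hω
  have hωfin : volume (Metric.ball (0 : EuclideanSpace ℝ (Fin n)) 1) ≠ ⊤ :=
    measure_ball_lt_top.ne
  have hωpos : 0 < ω := ENNReal.toReal_pos (Metric.measure_ball_pos _ _ one_pos).ne' hωfin
  refine ⟨(2 / ω) * (4 / lam) ^ n, by positivity, (ω / 2) / (4 / lam) ^ n, by positivity, ?_⟩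
  intro K S w b d m α β B x0 hK hS hw hd hm hα hβ hB hBε hdiam hsup hdrInt hx0 hwx0
  set t : ℝ := m / d with ht
  have ht0 : 0 < t := by positivity
  set G0 : Set (EuclideanSpace ℝ (Fin n)) := interior K ∩ w ⁻¹' (Set.Iio 0) with hG0
  have hG0o : IsOpen G0 :=
    (hw.mono interior_subset).isOpen_inter_preimage isOpen_interior isOpen_Iio
  have hG0s : ∀ x ∈ G0, Sup n lam Lam (b x) β (S.indicator (fun _ => α) x) w x :=
    fun x hx => (hsup x (interior_subset hx.1) hx.2).2.2
  have hG0b : ∀ x ∈ G0, 0 ≤ b x := fun x hx => (hsup x (interior_subset hx.1) hx.2).2.1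
  set Z : Set (EuclideanSpace ℝ (Fin n) →L[ℝ] EuclideanSpace ℝ (Fin n) →L[ℝ] ℝ) :=
    {T | ∀ v, 0 ≤ T v v} with hZ
  have hZc : IsClosed Z := by
    rw [hZ, Set.ofPred_forall]
    refine isClosed_iInter fun v => isClosed_le continuous_const ?_
    exact (ContinuousLinearMap.apply ℝ ℝ v).continuous.comp
      (ContinuousLinearMap.apply ℝ (EuclideanSpace ℝ (Fin n) →L[ℝ] ℝ) v).continuous
  have hc1 : ContinuousOn (fderiv ℝ w) G0 := fun x hx =>
    (((hG0s x hx).1.fderiv_right (m := 1) (by norm_num)).continuousAt).continuousWithinAt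
  have hc2 : ContinuousOn (fderiv ℝ (fderiv ℝ w)) G0 := fun x hx =>
    ((((hG0s x hx).1.fderiv_right (m := 1) (by norm_num)).fderiv_right (m := 0)
      (by norm_num)).continuousAt).continuousWithinAt
  set Γ : Set (EuclideanSpace ℝ (Fin n)) :=
    (G0 ∩ (fderiv ℝ w) ⁻¹' (Metric.ball 0 t)) \ (G0 ∩ (fderiv ℝ (fderiv ℝ w)) ⁻¹' Zᶜ) with hΓ
  have hΓm : MeasurableSet Γ :=
    (hc1.isOpen_inter_preimage hG0o Metric.isOpen_ball).measurableSet.diff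
      (hc2.isOpen_inter_preimage hG0o hZc.isOpen_compl).measurableSet
  have hΓG : ∀ x ∈ Γ, x ∈ G0 := fun x hx => hx.1.1
  have hΓZ : ∀ x ∈ Γ, ∀ v, 0 ≤ fderiv ℝ (fderiv ℝ w) x v v := by
    intro x hx
    by_contra hcon
    exact hx.2 ⟨hΓG x hx, hcon⟩
  have hcover : Metric.ball (0 : EuclideanSpace ℝ (Fin n)) t ⊆ gradMap w '' Γ := by
    intro p hp
    rw [mem_ball_zero_iff] at hp
    obtain ⟨x, hxi, hneg, hg, hpos⟩ := contact hK hw hdiam hd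
      (fun x hx hneg => ⟨(hsup x hx hneg).1, (hsup x hx hneg).2.2.1⟩) hx0 hwx0 hp
    refine ⟨x, ⟨⟨⟨hxi, hneg⟩, ?_⟩, fun h => h.2 hpos⟩, hg⟩
    rw [Set.mem_preimage, mem_ball_zero_iff, ← norm_gradMap, hg]
    exact hp
  have hvol := addHaar_image_le_lintegral_abs_det_fderiv (volume) hΓm
    (fun x hx => (gradMap_hasFDerivAt (hG0s x (hΓG x hx)).1).hasFDerivWithinAt)
  have hpt : ∀ x ∈ Γ, ENNReal.ofReal |(gradMap' w x).det| ≤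
      ENNReal.ofReal ((2 / lam) ^ n * (t + β) ^ n) * ENNReal.ofReal (b x ^ n) +
      S.indicator (fun _ => ENNReal.ofReal ((2 / lam) ^ n * α ^ n)) x := by
    intro x hx
    have hs := hG0s x (hΓG x hx)
    have hbx := hG0b x (hΓG x hx)
    rw [gradMap'_det hs.1]
    have hpsd := hess_psd hs.1 (hΓZ x hx)
    have h1 := det_le hpsd
    have h2 := hs.trace_le (hΓZ x hx)
    have h3 : ‖fderiv ℝ w x‖ ≤ t := by
      have := hx.1.2
      rw [Set.mem_preimage, mem_ball_zero_iff] at this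
      exact this.le
    have h4 : (hess n w x).trace ≤ (b x * (t + β) + S.indicator (fun _ => α) x) / lam := by
      rw [le_div_iff₀ hlam]
      have := mul_le_mul_of_nonneg_left h3 hbx
      nlinarith
    have hind : 0 ≤ S.indicator (fun _ => α) x := Set.indicator_nonneg (fun _ _ => hα) x
    have h5 : |(hess n w x).det| ≤
        (2 / lam) ^ n * (t + β) ^ n * b x ^ n + (2 / lam) ^ n * (S.indicator (fun _ => α) x) ^ n := by
      calc |(hess n w x).det| ≤ _ := h1
        _ ≤ ((b x * (t + β) + S.indicator (fun _ => α) x) / lam) ^ n :=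
            pow_le_pow_left₀ hpsd.trace_nonneg h4 n
        _ = (b x * (t + β) + S.indicator (fun _ => α) x) ^ n / lam ^ n := div_pow _ _ _
        _ ≤ (2 ^ n * ((b x * (t + β)) ^ n + (S.indicator (fun _ => α) x) ^ n)) / lam ^ n := by
            gcongr
            exact add_pow_le_two (by positivity) hind n
        _ = _ := by rw [div_pow, mul_pow]; ring
    by_cases hxS : x ∈ S
    · rw [Set.indicator_of_mem hxS] at h5
      rw [Set.indicator_of_mem hxS, ← ENNReal.ofReal_mul (by positivity),
        ← ENNReal.ofReal_add (by positivity) (by positivity)]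
      exact ENNReal.ofReal_le_ofReal h5
    · rw [Set.indicator_of_notMem hxS] at h4
      rw [Set.indicator_of_notMem hxS, add_zero, ← ENNReal.ofReal_mul (by positivity)]
      apply ENNReal.ofReal_le_ofReal
      calc |(hess n w x).det| ≤ _ := h1
        _ ≤ ((b x * (t + β) + 0) / lam) ^ n := pow_le_pow_left₀ hpsd.trace_nonneg h4 n
        _ = (1 / lam) ^ n * (t + β) ^ n * b x ^ n := by
            rw [add_zero, div_pow, div_pow, mul_pow]; ring
        _ ≤ _ := by gcongr; norm_num
  have hsub : Γ ⊆ {x | x ∈ K ∧ w x < 0} :=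
    fun x hx => ⟨interior_subset (hΓG x hx).1, (hΓG x hx).2⟩
  set V : ℝ := (volume (S ∩ {x | x ∈ K ∧ w x < 0})).toReal with hV
  have hVfin : volume (S ∩ {x | x ∈ K ∧ w x < 0}) ≠ ⊤ :=
    ((measure_mono (fun x hx => hx.2.1)).trans_lt hK.measure_lt_top).ne
  have hfinal : ENNReal.ofReal (t ^ n * ω) ≤
      ENNReal.ofReal ((2 / lam) ^ n * (t + β) ^ n * B + (2 / lam) ^ n * α ^ n * V) := by
    calc ENNReal.ofReal (t ^ n * ω) = volume (Metric.ball (0 : EuclideanSpace ℝ (Fin n)) t) := by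
          rw [Measure.addHaar_ball_of_pos _ _ ht0, ENNReal.ofReal_mul (by positivity), hω,
            ENNReal.ofReal_toReal hωfin]
          simp
      _ ≤ volume (gradMap w '' Γ) := measure_mono hcover
      _ ≤ _ := hvol
      _ ≤ ∫⁻ x in Γ, (ENNReal.ofReal ((2 / lam) ^ n * (t + β) ^ n) * ENNReal.ofReal (b x ^ n) +
            S.indicator (fun _ => ENNReal.ofReal ((2 / lam) ^ n * α ^ n)) x) :=
          setLIntegral_mono' hΓm hpt
      _ = ENNReal.ofReal ((2 / lam) ^ n * (t + β) ^ n) * (∫⁻ x in Γ, ENNReal.ofReal (b x ^ n)) +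
            ENNReal.ofReal ((2 / lam) ^ n * α ^ n) * volume (S ∩ Γ) := by
          rw [lintegral_add_right _ (measurable_const.indicator hS),
            lintegral_const_mul' _ _ ENNReal.ofReal_ne_top, lintegral_indicator hS,
            setLIntegral_const, Measure.restrict_apply hS]
      _ ≤ ENNReal.ofReal ((2 / lam) ^ n * (t + β) ^ n) * ENNReal.ofReal B +
            ENNReal.ofReal ((2 / lam) ^ n * α ^ n) * ENNReal.ofReal V := by
          gcongr
          · exact (lintegral_mono_set hsub).trans hdrInt
          · rw [hV, ENNReal.ofReal_toReal hVfin]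
            exact measure_mono (Set.inter_subset_inter_right _ hsub)
      _ = _ := by
          rw [← ENNReal.ofReal_mul (by positivity), ← ENNReal.ofReal_mul (by positivity),
            ← ENNReal.ofReal_add (by positivity) (by positivity)]
  have hV0 : 0 ≤ V := ENNReal.toReal_nonneg
  rw [ENNReal.ofReal_le_ofReal_iff (by positivity)] at hfinal
  have h6 := add_pow_le_two ht0.le hβ n
  have h24 : (4 / lam) ^ n = (2 / lam) ^ n * 2 ^ n := by rw [← mul_pow]; congr 1; ring
  have h7 : t ^ n * ω ≤ (4 / lam) ^ n * (t ^ n * B + β ^ n * B + α ^ n * V) := by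
    have e1 : (2 / lam) ^ n * (t + β) ^ n * B ≤ (4 / lam) ^ n * ((t ^ n + β ^ n) * B) := by
      rw [h24]
      have := mul_le_mul_of_nonneg_left h6 (by positivity : 0 ≤ (2 / lam) ^ n * B)
      nlinarith
    have e2 : (2 / lam) ^ n * α ^ n * V ≤ (4 / lam) ^ n * (α ^ n * V) := by
      rw [mul_assoc]
      gcongr
      norm_num
    nlinarith
  have h8 : (4 / lam) ^ n * (t ^ n * B) ≤ t ^ n * (ω / 2) := by
    rw [le_div_iff₀ (by positivity)] at hBε
    have := mul_le_mul_of_nonneg_left hBε (by positivity : 0 ≤ t ^ n)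
    nlinarith
  have h9 : t ^ n * (ω / 2) ≤ (4 / lam) ^ n * (α ^ n * V + β ^ n * B) := by nlinarith
  have h10 : t ^ n = (2 / ω) * (t ^ n * (ω / 2)) := by field_simp
  rw [h10, mul_assoc]
  gcongr

end CBH

namespace CBH
open Matrix
variable {n : ℕ}

lemma sqd_contDiff (z x : EuclideanSpace ℝ (Fin n)) :
    ContDiffAt ℝ 2 (fun y => ‖y - z‖ ^ 2) x :=
  ((contDiff_id.sub contDiff_const).norm_sq ℝ).contDiffAt

lemma sqd_hasFDerivAt (z x : EuclideanSpace ℝ (Fin n)) :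
    HasFDerivAt (fun y => ‖y - z‖ ^ 2) (2 • innerSL ℝ (x - z)) x := by
  have := ((hasFDerivAt_id x).sub_const z).norm_sq
  simpa using this

lemma sqd_fderiv_apply (z x : EuclideanSpace ℝ (Fin n)) (i : Fin n) :
    fderiv ℝ (fun y => ‖y - z‖ ^ 2) x (EuclideanSpace.single i 1) = 2 * (x i - z i) := by
  rw [(sqd_hasFDerivAt z x).fderiv]
  simp [EuclideanSpace.inner_single_right]

lemma sqd_fderiv_norm (z x : EuclideanSpace ℝ (Fin n)) :
    ‖fderiv ℝ (fun y => ‖y - z‖ ^ 2) x‖ ≤ 2 * ‖x - z‖ := by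
  rw [(sqd_hasFDerivAt z x).fderiv]
  refine (norm_nsmul_le).trans ?_
  rw [innerSL_apply_norm]; norm_num

lemma coord_hasFDerivAt (x : EuclideanSpace ℝ (Fin n)) (i : Fin n) :
    HasFDerivAt (fun y : EuclideanSpace ℝ (Fin n) => y i)
      (EuclideanSpace.proj i : EuclideanSpace ℝ (Fin n) →L[ℝ] ℝ) x :=
  (EuclideanSpace.proj i : EuclideanSpace ℝ (Fin n) →L[ℝ] ℝ).hasFDerivAt

lemma coord_contDiff (x : EuclideanSpace ℝ (Fin n)) (i : Fin n) :
    ContDiffAt ℝ 2 (fun y : EuclideanSpace ℝ (Fin n) => y i) x :=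
  (EuclideanSpace.proj i : EuclideanSpace ℝ (Fin n) →L[ℝ] ℝ).contDiff.contDiffAt

lemma abs_coord_le (x : EuclideanSpace ℝ (Fin n)) (i : Fin n) : |x i| ≤ ‖x‖ := by
  simpa using PiLp.norm_apply_le x i

lemma proj_norm_le (i : Fin n) :
    ‖(EuclideanSpace.proj i : EuclideanSpace ℝ (Fin n) →L[ℝ] ℝ)‖ ≤ 1 :=
  ContinuousLinearMap.opNorm_le_bound _ zero_le_one (fun x => by
    simpa using abs_coord_le x i)

lemma coord_fderiv_norm (x : EuclideanSpace ℝ (Fin n)) (i : Fin n) :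
    ‖fderiv ℝ (fun y : EuclideanSpace ℝ (Fin n) => y i) x‖ ≤ 1 := by
  rw [(coord_hasFDerivAt x i).fderiv]; exact proj_norm_le i

lemma hess_sqd (z x : EuclideanSpace ℝ (Fin n)) :
    hess n (fun y => ‖y - z‖ ^ 2) x = (2 : ℝ) • (1 : Matrix (Fin n) (Fin n) ℝ) := by
  ext i j
  unfold hess
  simp only [sqd_fderiv_apply]
  have := (((coord_hasFDerivAt x j).sub_const (z j)).const_mul (2 : ℝ)).fderiv
  rw [this]
  by_cases h : i = j
  · subst h; simp
  · simp [Matrix.one_apply_ne h, h]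

lemma hess_coord (x : EuclideanSpace ℝ (Fin n)) (k : Fin n) :
    hess n (fun y => y k) x = 0 := by
  ext i j
  unfold hess
  have : (fun y => fderiv ℝ (fun y : EuclideanSpace ℝ (Fin n) => y k) y
      (EuclideanSpace.single j (1 : ℝ))) = fun _ =>
      (EuclideanSpace.proj k : EuclideanSpace ℝ (Fin n) →L[ℝ] ℝ) (EuclideanSpace.single j (1 : ℝ))
      := by
    ext y; rw [(coord_hasFDerivAt y k).fderiv]
  rw [this]; simp

lemma hess_coord_sq (x : EuclideanSpace ℝ (Fin n)) (k : Fin n) :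
    hess n (fun y => (y k) ^ 2) x = (2 : ℝ) • vecMulVec (Pi.single k 1) (Pi.single k (1 : ℝ)) := by
  ext i j
  unfold hess
  have : (fun y => fderiv ℝ (fun y : EuclideanSpace ℝ (Fin n) => (y k) ^ 2) y
      (EuclideanSpace.single j (1 : ℝ))) = fun y =>
      (2 * (EuclideanSpace.single j (1 : ℝ) : EuclideanSpace ℝ (Fin n)) k) * y k := by
    ext y
    rw [((coord_hasFDerivAt y k).pow 2).fderiv]
    simp [mul_comm]
  rw [this, ((coord_hasFDerivAt x k).const_mul _).fderiv]
  by_cases h : k = j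
  · by_cases h' : k = i
    · subst h; subst h'; simp [vecMulVec_apply]
    · subst h; simp [vecMulVec_apply, h', Pi.single_apply, eq_comm]
  · simp [vecMulVec_apply, h, Pi.single_apply, eq_comm]

lemma hess_expsq (γ : ℝ) (z x : EuclideanSpace ℝ (Fin n)) :
    hess n (fun y => Real.exp (-γ * ‖y - z‖ ^ 2)) x = Real.exp (-γ * ‖x - z‖ ^ 2) •
      ((4 * γ ^ 2) • vecMulVec (x - z).ofLp (x - z).ofLp
        - (2 * γ) • (1 : Matrix (Fin n) (Fin n) ℝ)) := by
  ext i j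
  unfold hess
  have hE : ∀ y, HasFDerivAt (fun y => Real.exp (-γ * ‖y - z‖ ^ 2))
    (Real.exp (-γ * ‖y - z‖ ^ 2) • (-γ) • (2 • innerSL ℝ (y - z))) y := fun y =>
      ((sqd_hasFDerivAt z y).const_mul (-γ)).exp
  have : (fun y => fderiv ℝ (fun y => Real.exp (-γ * ‖y - z‖ ^ 2)) y
      (EuclideanSpace.single j (1 : ℝ))) = fun y =>
      Real.exp (-γ * ‖y - z‖ ^ 2) * ((-2 * γ) * (y j - z j)) := by
    ext y
    rw [(hE y).fderiv]
    simp [EuclideanSpace.inner_single_right]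
    ring
  rw [this, ((hE x).fun_mul (((coord_hasFDerivAt x j).sub_const (z j)).const_mul (-2 * γ))).fderiv]
  by_cases h : i = j
  · subst h; simp [EuclideanSpace.inner_single_right, vecMulVec_apply]; ring
  · simp [EuclideanSpace.inner_single_right, vecMulVec_apply, Matrix.one_apply_ne h, h]; ring

lemma expsq_contDiff (γ : ℝ) (z x : EuclideanSpace ℝ (Fin n)) :
    ContDiffAt ℝ 2 (fun y => Real.exp (-γ * ‖y - z‖ ^ 2)) x :=
  (contDiffAt_const.mul (sqd_contDiff z x)).exp

lemma expsq_fderiv_norm {γ : ℝ} (hγ : 0 ≤ γ) (z x : EuclideanSpace ℝ (Fin n)) :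
    ‖fderiv ℝ (fun y => Real.exp (-γ * ‖y - z‖ ^ 2)) x‖ ≤ 2 * γ * ‖x - z‖ := by
  have hE : HasFDerivAt (fun y => Real.exp (-γ * ‖y - z‖ ^ 2))
    (Real.exp (-γ * ‖x - z‖ ^ 2) • (-γ) • (2 • innerSL ℝ (x - z))) x :=
      ((sqd_hasFDerivAt z x).const_mul (-γ)).exp
  rw [hE.fderiv, norm_smul, norm_smul]
  have h1 : ‖(2 • innerSL ℝ (x - z) : EuclideanSpace ℝ (Fin n) →L[ℝ] ℝ)‖ ≤ 2 * ‖x - z‖ := by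
    refine (norm_nsmul_le).trans ?_
    rw [innerSL_apply_norm]; norm_num
  have h2 : ‖Real.exp (-γ * ‖x - z‖ ^ 2)‖ ≤ 1 := by
    rw [Real.norm_eq_abs, abs_of_pos (Real.exp_pos _), Real.exp_le_one_iff]
    nlinarith [mul_nonneg hγ (sq_nonneg ‖x - z‖)]
  have h3 : ‖(-γ)‖ = γ := by rw [norm_neg, Real.norm_eq_abs, abs_of_nonneg hγ]
  rw [h3]
  calc _ ≤ 1 * (γ * (2 * ‖x - z‖)) := by gcongr
    _ = _ := by ring

lemma psd_vec (v : Fin n → ℝ) : (vecMulVec v v).PosSemidef := by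
  simpa using Matrix.posSemidef_vecMulVec_self_star v

lemma Adm.vec {lam Lam : ℝ} {A : Matrix (Fin n) (Fin n) ℝ} (h : Adm n lam Lam A)
    (v : EuclideanSpace ℝ (Fin n)) : lam * ‖v‖ ^ 2 ≤ (A * vecMulVec v.ofLp v.ofLp).trace := by
  have := h.mul_trace (psd_vec v.ofLp)
  rw [Matrix.trace_vecMulVec] at this
  rw [EuclideanSpace.norm_sq_eq]
  simpa [dotProduct, pow_two] using this

lemma Adm.vec_single {lam Lam : ℝ} {A : Matrix (Fin n) (Fin n) ℝ} (h : Adm n lam Lam A)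
    (k : Fin n) : lam ≤ (A * vecMulVec (Pi.single k 1) (Pi.single k (1 : ℝ))).trace := by
  have := h.mul_trace (psd_vec (Pi.single k 1))
  rw [Matrix.trace_vecMulVec] at this
  simpa using this

end CBH

namespace CBH
open Matrix
variable {n : ℕ}

lemma Sup.add_const {lam Lam b β α : ℝ} {w : EuclideanSpace ℝ (Fin n) → ℝ}
    {x : EuclideanSpace ℝ (Fin n)} (h : Sup n lam Lam b β α w x) (hb : 0 ≤ b) (c : ℝ) :
    Sup n lam Lam b β α (fun y => w y + c) x := by
  have := h.add (φ := fun _ => c) hb contDiffAt_const (β' := 0) (α' := 0) (by simp)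
    (fun A _ => by
      have : hess n (fun _ => c) x = 0 := by ext i j; simp [hess]
      rw [this]; simp)
  simpa using this

lemma diam_closedBall_le {z x y : EuclideanSpace ℝ (Fin n)} {r : ℝ}
    (hx : x ∈ Metric.closedBall z r) (hy : y ∈ Metric.closedBall z r) : ‖x - y‖ ≤ 2 * r := by
  rw [← dist_eq_norm]
  rw [Metric.mem_closedBall] at hx hy
  linarith [dist_triangle_right x y z]

lemma growth (n : ℕ) {lam Lam : ℝ} (hlam : 0 < lam) (hLam : lam ≤ Lam) {D : ℝ} (hD : 1 ≤ D) :
    ∃ μ > 0, ∃ ε > 0, ∀ (u b : EuclideanSpace ℝ (Fin n) → ℝ) (x0 : EuclideanSpace ℝ (Fin n))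
      (r M : ℝ), 0 < r → 0 < M → ContinuousOn u (Metric.closedBall x0 r) → M ≤ u x0 →
      (∀ x ∈ Metric.closedBall x0 r, M / 2 < u x → 0 ≤ b x ∧
        Sup n lam Lam (b x) 0 0 (fun y => -u y) x) →
      (∫⁻ x in {x | x ∈ Metric.closedBall x0 r ∧ M / 2 < u x}, ENNReal.ofReal (b x ^ n))
        ≤ ENNReal.ofReal ε →
      (volume {x | x ∈ Metric.closedBall x0 r ∧ M / 2 < u x}).toReal ≤ μ * r ^ n →
      ∃ x ∈ Metric.closedBall x0 r, D * M < u x := by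
  obtain ⟨C, hC, ε0, hε0, habp⟩ := abp n (Lam := Lam) hlam
  have hLam0 : 0 < Lam := hlam.trans_le hLam
  set a1 : ℝ := (2 * D * n * Lam) ^ n with ha1
  set a2 : ℝ := (2 * D) ^ n with ha2
  have ha1' : 0 ≤ a1 := by positivity
  have ha2' : 0 ≤ a2 := by positivity
  set q : ℝ := (1 / 4) ^ n with hq
  have hq0 : 0 < q := by positivity
  refine ⟨q / (4 * C * (a1 + 1)), by positivity, min ε0 (q / (4 * C * (a2 + 1))), by positivity, ?_⟩
  intro u b x0 r M hr hM hu hux hsup hdrInt hvol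
  by_contra hcon
  push Not at hcon
  set ε := min ε0 (q / (4 * C * (a2 + 1))) with hε
  have hε0 : 0 < ε := by positivity
  set w : EuclideanSpace ℝ (Fin n) → ℝ :=
    fun y => (-u y + (D * M / r ^ 2) * ‖y - x0‖ ^ 2) + M / 2 with hw
  have hwneg : ∀ x ∈ Metric.closedBall x0 r, w x < 0 → M / 2 < u x ∧ ‖x - x0‖ < r := by
    intro x hx hx'
    simp only [hw] at hx'
    have h0 : 0 ≤ (D * M / r ^ 2) * ‖x - x0‖ ^ 2 := by positivity
    refine ⟨by linarith, ?_⟩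
    by_contra hge
    push Not at hge
    have h1 : r ^ 2 ≤ ‖x - x0‖ ^ 2 := pow_le_pow_left₀ hr.le hge 2
    have h2 : D * M ≤ (D * M / r ^ 2) * ‖x - x0‖ ^ 2 := by
      calc D * M = (D * M / r ^ 2) * r ^ 2 := by field_simp
        _ ≤ _ := by gcongr
    linarith [hcon x hx]
  have key := habp (Metric.closedBall x0 r) Set.univ w b (2 * r) (M / 2)
    (2 * D * M * n * Lam / r ^ 2) (2 * D * M / r) ε x0 (isCompact_closedBall _ _)
    MeasurableSet.univ
    (by
      refine ((hu.neg).add ?_).add continuousOn_const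
      fun_prop)
    (by positivity) (by positivity) (by positivity) (by positivity) hε0.le (min_le_left _ _)
    (fun x hx y hy => diam_closedBall_le hx hy)
    (by
      intro x hx hx'
      obtain ⟨h1, h2⟩ := hwneg x hx hx'
      obtain ⟨hb, hs⟩ := hsup x hx h1
      refine ⟨?_, hb, ?_⟩
      · rw [mem_interior_iff_mem_nhds]
        refine Filter.mem_of_superset (Metric.isOpen_ball.mem_nhds ?_) Metric.ball_subset_closedBall
        rwa [Metric.mem_ball, dist_eq_norm]
      · refine Sup.add_const ?_ hb _
        have := hs.add (φ := fun y => (D * M / r ^ 2) * ‖y - x0‖ ^ 2) hb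
          (contDiffAt_const.mul (sqd_contDiff x0 x)) (β' := 2 * D * M / r)
          (α' := 2 * D * M * n * Lam / r ^ 2) ?_ ?_
        · simpa using this
        · rw [fderiv_const_mul ((sqd_contDiff x0 x).differentiableAt (by norm_num)), norm_smul,
            Real.norm_eq_abs, abs_of_nonneg (by positivity)]
          calc D * M / r ^ 2 * _ ≤ D * M / r ^ 2 * (2 * r) := by
                gcongr
                exact (sqd_fderiv_norm x0 x).trans (by linarith)
            _ = _ := by field_simp
        · intro A hA
          rw [hess_const_mul _ (sqd_contDiff x0 x), hess_sqd]
          simp only [Matrix.mul_smul, Matrix.trace_smul, Matrix.mul_one, smul_eq_mul]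
          calc D * M / r ^ 2 * (2 * A.trace) ≤ D * M / r ^ 2 * (2 * (n * Lam)) := by
                gcongr; exact hA.trace_le
            _ = _ := by ring)
    (by
      refine (lintegral_mono_set ?_).trans hdrInt
      exact fun x hx => ⟨hx.1, (hwneg x hx.1 hx.2).1⟩)
    (Metric.mem_closedBall_self hr.le)
    (by simp only [hw]; simp; linarith)
  have hV : (volume (Set.univ ∩ {x | x ∈ Metric.closedBall x0 r ∧ w x < 0})).toReal
      ≤ q / (4 * C * (a1 + 1)) * r ^ n := by
    refine le_trans (ENNReal.toReal_mono ?_ (measure_mono ?_)) hvol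
    · exact ((measure_mono (fun x hx => hx.1)).trans_lt
        (isCompact_closedBall x0 r).measure_lt_top).ne
    · exact fun x hx => ⟨hx.2.1, (hwneg x hx.2.1 hx.2.2).1⟩
  have e1 : (M / 2 / (2 * r)) ^ n = q * (M / r) ^ n := by
    rw [hq, ← mul_pow]; congr 1; field_simp; norm_num
  have e2 : (2 * D * M * n * Lam / r ^ 2) ^ n * r ^ n = a1 * (M / r) ^ n := by
    rw [ha1, ← mul_pow, ← mul_pow]; congr 1; field_simp
  have e3 : (2 * D * M / r) ^ n = a2 * (M / r) ^ n := by
    rw [ha2, ← mul_pow]; congr 1; field_simp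
  set P := (M / r) ^ n with hP
  have hP0 : 0 < P := by positivity
  have f1 : a1 * (q / (4 * C * (a1 + 1))) ≤ q / (4 * C) := by
    rw [mul_div_assoc', div_le_div_iff₀ (by positivity) (by positivity)]
    nlinarith [mul_pos hq0 hC]
  have f2 : a2 * ε ≤ q / (4 * C) := by
    calc a2 * ε ≤ a2 * (q / (4 * C * (a2 + 1))) := by gcongr; exact min_le_right _ _
      _ ≤ _ := by
        rw [mul_div_assoc', div_le_div_iff₀ (by positivity) (by positivity)]
        nlinarith [mul_pos hq0 hC]
  have : q * P ≤ C * (q / (4 * C) * P + q / (4 * C) * P) := by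
    rw [e1] at key
    refine key.trans (mul_le_mul_of_nonneg_left (add_le_add ?_ ?_) hC.le)
    · calc _ ≤ (2 * D * M * n * Lam / r ^ 2) ^ n * (q / (4 * C * (a1 + 1)) * r ^ n) := by gcongr
        _ = ((2 * D * M * n * Lam / r ^ 2) ^ n * r ^ n) * (q / (4 * C * (a1 + 1))) := by ring
        _ = a1 * (q / (4 * C * (a1 + 1))) * P := by rw [e2]; ring
        _ ≤ _ := by gcongr
    · calc _ = a2 * ε * P := by rw [e3]; ring
        _ ≤ _ := by gcongr
  have e4 : C * (q / (4 * C) * P + q / (4 * C) * P) = q * P / 2 := by field_simp; norm_num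
  rw [e4] at this
  nlinarith [mul_pos hq0 hP0]

lemma basic (n : ℕ) {lam Lam : ℝ} (hn : 1 ≤ n) (hlam : 0 < lam) (hLam : lam ≤ Lam) :
    ∃ μ > 0, ∃ ε > 0, ∃ M > 1, ∀ (u b : EuclideanSpace ℝ (Fin n) → ℝ)
      (y x1 : EuclideanSpace ℝ (Fin n)) (r : ℝ), 0 < r →
      ContinuousOn u (Metric.closedBall y (4 * r)) →
      (∀ x ∈ Metric.closedBall y (4 * r), 0 ≤ u x ∧ 0 ≤ b x ∧ Sup n lam Lam (b x) 0 0 u x) →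
      (∫⁻ x in Metric.closedBall y (4 * r), ENNReal.ofReal (b x ^ n)) ≤ ENNReal.ofReal ε →
      x1 ∈ Metric.closedBall y (3 * r) → u x1 ≤ 1 →
      μ * r ^ n ≤ (volume {x | x ∈ Metric.closedBall y r ∧ u x ≤ M}).toReal := by
  obtain ⟨C, hC, ε0, hε0, habp⟩ := abp n (Lam := Lam) hlam
  have hLam0 : 0 < Lam := hlam.trans_le hLam
  have hn0 : (0 : ℝ) < n := by exact_mod_cast hn
  set γ : ℝ := n * Lam / (2 * lam) with hγ
  have hγ0 : 0 < γ := by positivity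
  set g : ℝ := Real.exp (-9 * γ) - Real.exp (-16 * γ) with hg
  have hg0 : 0 < g := by
    rw [hg, sub_pos, Real.exp_lt_exp]; nlinarith
  have hg1 : g < 1 := by
    have : Real.exp (-9 * γ) ≤ 1 := by rw [Real.exp_le_one_iff]; nlinarith
    linarith [Real.exp_pos (-16 * γ)]
  set A0 : ℝ := 2 / g with hA0
  have hA0p : 0 < A0 := by positivity
  have hA01 : 1 < A0 := by rw [hA0, lt_div_iff₀ hg0]; linarith
  set a1 : ℝ := (2 * A0 * γ * n * Lam) ^ n with ha1
  set a2 : ℝ := (8 * A0 * γ) ^ n with ha2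
  have ha1' : 0 < a1 := by positivity
  have ha2' : 0 < a2 := by positivity
  set q : ℝ := (1 / 8) ^ n with hq
  have hq0 : 0 < q := by positivity
  refine ⟨q / (2 * C * a1), by positivity, min ε0 (q / (2 * C * a2)), by positivity,
    A0, hA01, ?_⟩
  intro u b y x1 r hr hu hsup hdrInt hx1 hux1
  set ε := min ε0 (q / (2 * C * a2)) with hε
  have hε0 : 0 < ε := by positivity
  set c0 : ℝ := A0 * Real.exp (-16 * γ) with hc0
  set w : EuclideanSpace ℝ (Fin n) → ℝ :=
    fun x => (u x + (-A0) * Real.exp (-(γ / r ^ 2) * ‖x - y‖ ^ 2)) + c0 with hw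
  have hwneg : ∀ x ∈ Metric.closedBall y (4 * r), w x < 0 → u x ≤ A0 ∧ ‖x - y‖ < 4 * r := by
    intro x hx hx'
    simp only [hw] at hx'
    have hu0 := (hsup x hx).1
    have h1 : Real.exp (-(γ / r ^ 2) * ‖x - y‖ ^ 2) ≤ 1 := by
      rw [Real.exp_le_one_iff]
      have : 0 ≤ (γ / r ^ 2) * ‖x - y‖ ^ 2 := by positivity
      linarith
    have hc : 0 < c0 := by positivity
    refine ⟨by nlinarith, ?_⟩
    by_contra hge
    push Not at hge
    have h2 : (4 * r) ^ 2 ≤ ‖x - y‖ ^ 2 := pow_le_pow_left₀ (by positivity) hge 2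
    have h3 : Real.exp (-(γ / r ^ 2) * ‖x - y‖ ^ 2) ≤ Real.exp (-16 * γ) := by
      rw [Real.exp_le_exp]
      have : (γ / r ^ 2) * (4 * r) ^ 2 ≤ (γ / r ^ 2) * ‖x - y‖ ^ 2 := by gcongr
      have e : (γ / r ^ 2) * (4 * r) ^ 2 = 16 * γ := by field_simp; norm_num
      linarith
    have h4 := mul_le_mul_of_nonneg_left h3 hA0p.le
    linarith
  have key := habp (Metric.closedBall y (4 * r)) (Metric.closedBall y r) w b (8 * r) 1
    (2 * A0 * γ * n * Lam / r ^ 2) (8 * A0 * γ / r) ε x1 (isCompact_closedBall _ _)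
    Metric.isClosed_closedBall.measurableSet
    (by
      refine (hu.add ?_).add continuousOn_const
      fun_prop)
    (by positivity) one_pos (by positivity) (by positivity) hε0.le (min_le_left _ _)
    (fun x hx z hz => (diam_closedBall_le hx hz).trans (by linarith))
    (by
      intro x hx hx'
      obtain ⟨h1, h2⟩ := hwneg x hx hx'
      obtain ⟨hu0, hb, hs⟩ := hsup x hx
      refine ⟨?_, hb, ?_⟩
      · rw [mem_interior_iff_mem_nhds]
        refine Filter.mem_of_superset (Metric.isOpen_ball.mem_nhds ?_) Metric.ball_subset_closedBall
        rwa [Metric.mem_ball, dist_eq_norm]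
      · refine Sup.add_const ?_ hb _
        have := hs.add (φ := fun x => (-A0) * Real.exp (-(γ / r ^ 2) * ‖x - y‖ ^ 2)) hb
          (contDiffAt_const.mul (expsq_contDiff _ y x)) (β' := 8 * A0 * γ / r)
          (α' := (Metric.closedBall y r).indicator (fun _ => 2 * A0 * γ * n * Lam / r ^ 2) x) ?_ ?_
        · simpa using this
        · rw [fderiv_const_mul ((expsq_contDiff _ y x).differentiableAt (by norm_num)), norm_smul,
            norm_neg, Real.norm_eq_abs, abs_of_nonneg (by positivity)]
          calc A0 * _ ≤ A0 * (2 * (γ / r ^ 2) * (4 * r)) := by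
                gcongr
                exact (expsq_fderiv_norm (by positivity) y x).trans (by gcongr)
            _ = _ := by field_simp; norm_num
        · intro A hA
          rw [hess_const_mul _ (expsq_contDiff _ y x), hess_expsq]
          simp only [Matrix.mul_smul, Matrix.trace_smul, Matrix.mul_one, smul_eq_mul,
            Matrix.mul_sub, Matrix.trace_sub]
          set E := Real.exp (-(γ / r ^ 2) * ‖x - y‖ ^ 2) with hE
          have hEp : 0 < E := Real.exp_pos _
          have hE1 : E ≤ 1 := by
            rw [hE, Real.exp_le_one_iff]
            have : 0 ≤ (γ / r ^ 2) * ‖x - y‖ ^ 2 := by positivity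
            linarith
          have t1 := hA.vec (x - y)
          have t2 := hA.trace_le
          set T := (A * vecMulVec (x - y).ofLp (x - y).ofLp).trace with hT
          have t3 : 4 * (γ / r ^ 2) ^ 2 * (lam * ‖x - y‖ ^ 2) - 2 * (γ / r ^ 2) * (n * Lam) ≤
              4 * (γ / r ^ 2) ^ 2 * T - 2 * (γ / r ^ 2) * A.trace := by gcongr
          by_cases hxr : x ∈ Metric.closedBall y r
          · rw [Set.indicator_of_mem hxr]
            have t4 : 0 ≤ 4 * (γ / r ^ 2) ^ 2 * (lam * ‖x - y‖ ^ 2) := by positivity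
            have t5 : E * (-(2 * (γ / r ^ 2) * (n * Lam))) ≤
              E * (4 * (γ / r ^ 2) ^ 2 * T - 2 * (γ / r ^ 2) * A.trace) :=
                mul_le_mul_of_nonneg_left (by linarith) hEp.le
            have t6 : E * (2 * (γ / r ^ 2) * (n * Lam)) ≤ 1 * (2 * (γ / r ^ 2) * (n * Lam)) :=
              mul_le_mul_of_nonneg_right hE1 (by positivity)
            have t7 : -A0 * (E * (4 * (γ / r ^ 2) ^ 2 * T - 2 * (γ / r ^ 2) * A.trace)) ≤
              A0 * (2 * (γ / r ^ 2) * (n * Lam)) := by nlinarith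
            refine t7.trans (le_of_eq (by ring))
          · rw [Set.indicator_of_notMem hxr]
            rw [Metric.mem_closedBall, dist_eq_norm, not_le] at hxr
            have t4 : r ^ 2 ≤ ‖x - y‖ ^ 2 := pow_le_pow_left₀ hr.le hxr.le 2
            have t5 : 4 * (γ / r ^ 2) ^ 2 * (lam * r ^ 2) ≤
              4 * (γ / r ^ 2) ^ 2 * (lam * ‖x - y‖ ^ 2) := by gcongr
            have t6 : 4 * (γ / r ^ 2) ^ 2 * (lam * r ^ 2) = 2 * (γ / r ^ 2) * (n * Lam) := by
              rw [hγ]; field_simp; norm_num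
            have t7 : 0 ≤ 4 * (γ / r ^ 2) ^ 2 * T - 2 * (γ / r ^ 2) * A.trace := by linarith
            have := mul_nonneg hA0p.le (mul_nonneg hEp.le t7)
            linarith)
    (by
      refine (lintegral_mono_set ?_).trans hdrInt
      exact fun x hx => hx.1)
    (Metric.closedBall_subset_closedBall (by linarith) hx1)
    (by
      simp only [hw]
      rw [Metric.mem_closedBall, dist_eq_norm] at hx1
      have h2 : ‖x1 - y‖ ^ 2 ≤ (3 * r) ^ 2 := pow_le_pow_left₀ (by positivity) hx1 2
      have h3 : Real.exp (-9 * γ) ≤ Real.exp (-(γ / r ^ 2) * ‖x1 - y‖ ^ 2) := by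
        rw [Real.exp_le_exp]
        have : (γ / r ^ 2) * ‖x1 - y‖ ^ 2 ≤ (γ / r ^ 2) * (3 * r) ^ 2 := by gcongr
        have e : (γ / r ^ 2) * (3 * r) ^ 2 = 9 * γ := by field_simp; norm_num
        linarith
      have h4 := mul_le_mul_of_nonneg_left h3 hA0p.le
      have h5 : A0 * Real.exp (-9 * γ) - A0 * Real.exp (-16 * γ) = 2 := by
        rw [← mul_sub, ← hg, hA0]; field_simp
      linarith)
  set V := (volume {x | x ∈ Metric.closedBall y r ∧ u x ≤ A0}).toReal with hV
  have hVle : (volume (Metric.closedBall y r ∩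
      {x | x ∈ Metric.closedBall y (4 * r) ∧ w x < 0})).toReal ≤ V := by
    refine (ENNReal.toReal_mono ?_ (measure_mono ?_))
    · exact ((measure_mono (fun x hx => hx.1)).trans_lt
        (isCompact_closedBall y r).measure_lt_top).ne
    · exact fun x hx => ⟨hx.1, (hwneg x hx.2.1 hx.2.2).1⟩
  have e1 : (1 / (8 * r)) ^ n = q * (1 / r) ^ n := by
    rw [hq, ← mul_pow]; congr 1; field_simp
  have e2 : (2 * A0 * γ * n * Lam / r ^ 2) ^ n = a1 * ((1 / r) ^ n * (1 / r) ^ n) := by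
    rw [ha1, ← mul_pow, ← mul_pow]; congr 1; field_simp
  have e3 : (8 * A0 * γ / r) ^ n = a2 * (1 / r) ^ n := by
    rw [ha2, ← mul_pow]; congr 1; field_simp
  set P := (1 / r) ^ n with hP
  have hP0 : 0 < P := by positivity
  have hPr : P * r ^ n = 1 := by rw [hP, ← mul_pow]; field_simp; simp
  have f2 : a2 * ε ≤ q / (2 * C) := by
    calc a2 * ε ≤ a2 * (q / (2 * C * a2)) := by gcongr; exact min_le_right _ _
      _ = _ := by field_simp
  have f3 : q * P ≤ C * (a1 * (P * P) * V + q / (2 * C) * P) := by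
    rw [e1] at key
    refine key.trans (mul_le_mul_of_nonneg_left (add_le_add ?_ ?_) hC.le)
    · rw [e2]; gcongr
    · calc _ = a2 * ε * P := by rw [e3]; ring
        _ ≤ _ := by gcongr
  have e4 : C * (a1 * (P * P) * V + q / (2 * C) * P) = (C * a1 * P * V + q / 2) * P := by
    field_simp
  rw [e4] at f3
  have f4 : q ≤ C * a1 * P * V + q / 2 := le_of_mul_le_mul_right f3 hP0
  rw [div_mul_eq_mul_div, div_le_iff₀ (by positivity)]
  have hrn : 0 < r ^ n := by positivity
  have f5 : q / 2 * r ^ n ≤ C * a1 * P * V * r ^ n :=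
    mul_le_mul_of_nonneg_right (by linarith) hrn.le
  have e5 : C * a1 * P * V * r ^ n = C * a1 * V := by
    calc _ = C * a1 * V * (P * r ^ n) := by ring
      _ = _ := by rw [hPr, mul_one]
  rw [e5] at f5
  linarith

end CBH

namespace CBH
variable {n : ℕ}

lemma doubling {E F : Set (EuclideanSpace ℝ (Fin n))} {z x : EuclideanSpace ℝ (Fin n)} {R μ : ℝ}
    (hprop : ∀ (y : EuclideanSpace ℝ (Fin n)) (r : ℝ), 0 < r → ‖y - z‖ + r ≤ R →
      ∀ x1 ∈ Metric.closedBall y (3 * r), x1 ∈ Metric.closedBall z R → x1 ∉ F →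
      ENNReal.ofReal (μ * r ^ n) ≤ volume (Metric.closedBall y r \ E))
    (hB : ENNReal.ofReal (μ * R ^ n) ≤ volume (Metric.closedBall z R \ E)) (hx : x ∈ Metric.closedBall z R) :
    ∀ (k : ℕ) (y : EuclideanSpace ℝ (Fin n)) (r : ℝ), 0 < r → ‖y - z‖ + r ≤ R →
      x ∈ Metric.closedBall y r →
      volume (Metric.closedBall y r \ E) < ENNReal.ofReal (μ * r ^ n) → R < 2 ^ k * (2 * r) →
      ∃ (y' : EuclideanSpace ℝ (Fin n)) (r' : ℝ), 0 < r' ∧ r' ≤ R ∧ x ∈ Metric.closedBall y' r' ∧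
        Metric.closedBall y' r' ⊆ F ∧
        ENNReal.ofReal (μ * r' ^ n) ≤ volume (Metric.closedBall y' r' \ E) := by
  have hF : ∀ (y : EuclideanSpace ℝ (Fin n)) (r : ℝ), 0 < r → ‖y - z‖ + r ≤ R →
      volume (Metric.closedBall y r \ E) < ENNReal.ofReal (μ * r ^ n) →
      Metric.closedBall y (3 * r) ∩ Metric.closedBall z R ⊆ F := by
    intro y r hr h1 h2 x1 hx1
    by_contra hcon
    exact absurd (hprop y r hr h1 x1 hx1.1 hx1.2 hcon) (not_le.2 h2)
  have hbig : ∀ (y : EuclideanSpace ℝ (Fin n)) (r : ℝ), 0 < r → ‖y - z‖ + r ≤ R →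
      volume (Metric.closedBall y r \ E) < ENNReal.ofReal (μ * r ^ n) → R < 2 * r →
      ∃ (y' : EuclideanSpace ℝ (Fin n)) (r' : ℝ), 0 < r' ∧ r' ≤ R ∧ x ∈ Metric.closedBall y' r' ∧
        Metric.closedBall y' r' ⊆ F ∧
        ENNReal.ofReal (μ * r' ^ n) ≤ volume (Metric.closedBall y' r' \ E) := by
    intro y r hr h1 h2 h3
    have hyz := norm_nonneg (y - z)
    refine ⟨z, R, by linarith, le_rfl, hx, ?_, hB⟩
    intro p hp
    refine hF y r hr h1 h2 ⟨?_, hp⟩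
    rw [Metric.mem_closedBall] at hp ⊢
    have := dist_triangle p z y
    rw [dist_comm z y, dist_eq_norm y z] at this
    linarith
  intro k
  induction k with
  | zero =>
    intro y r hr h1 hxr h2 h3
    exact hbig y r hr h1 h2 (by linarith)
  | succ k ih =>
    intro y r hr h1 hxr h2 h3
    by_cases h4 : R < 2 * r
    · exact hbig y r hr h1 h2 h4
    push Not at h4
    have hyz := norm_nonneg (y - z)
    have hRr : 0 < R - r := by linarith
    set t : ℝ := (R - 2 * r) / (R - r) with ht
    have ht0 : 0 ≤ t := div_nonneg (by linarith) hRr.le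
    have htm : t * (R - r) = R - 2 * r := by rw [ht]; field_simp
    set y' := z + t • (y - z) with hy'
    have e1 : ‖y' - z‖ = t * ‖y - z‖ := by
      rw [hy', add_sub_cancel_left, norm_smul, Real.norm_eq_abs, abs_of_nonneg ht0]
    have e2 : ‖y - y'‖ ≤ r := by
      have h5 : y - y' = (1 - t) • (y - z) := by rw [hy']; module
      have ht1 : 0 ≤ 1 - t := by
        rw [ht, sub_nonneg, div_le_one hRr]; linarith
      rw [h5, norm_smul, Real.norm_eq_abs, abs_of_nonneg ht1]
      nlinarith
    have e3 : ‖y' - z‖ + 2 * r ≤ R := by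
      rw [e1]; nlinarith
    have hx' : x ∈ Metric.closedBall y' (2 * r) := by
      rw [Metric.mem_closedBall] at hxr ⊢
      have := dist_triangle x y y'
      rw [dist_eq_norm y y'] at this
      linarith
    by_cases h5 : volume (Metric.closedBall y' (2 * r) \ E) < ENNReal.ofReal (μ * (2 * r) ^ n)
    · exact ih y' (2 * r) (by linarith) e3 hx' h5 (by rw [pow_succ] at h3; linarith)
    · push Not at h5
      refine ⟨y', 2 * r, by linarith, by linarith [norm_nonneg (y' - z)], hx', ?_, h5⟩
      intro p hp
      rw [Metric.mem_closedBall] at hp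
      refine hF y r hr h1 h2 ⟨?_, ?_⟩
      · rw [Metric.mem_closedBall]
        have := dist_triangle p y' y
        rw [dist_comm y' y, dist_eq_norm y y'] at this
        linarith
      · rw [Metric.mem_closedBall]
        have := dist_triangle p y' z
        rw [dist_eq_norm y' z] at this
        linarith

lemma inkspots (n : ℕ) (hn : 1 ≤ n) {μ : ℝ} (hμ : 0 < μ) : ∃ C > 0, ∀ (E F : Set (EuclideanSpace ℝ (Fin n)))
    (z : EuclideanSpace ℝ (Fin n)) (R : ℝ), 0 < R → MeasurableSet E →
    E ⊆ Metric.closedBall z R →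
    (∀ (y : EuclideanSpace ℝ (Fin n)) (r : ℝ), 0 < r → ‖y - z‖ + r ≤ R →
      ∀ x1 ∈ Metric.closedBall y (3 * r), x1 ∈ Metric.closedBall z R → x1 ∉ F →
      ENNReal.ofReal (μ * r ^ n) ≤ volume (Metric.closedBall y r \ E)) →
    ENNReal.ofReal (μ * R ^ n) ≤ volume (Metric.closedBall z R \ E) →
    volume E ≤ ENNReal.ofReal C * volume (F \ E) := by
  have : Nonempty (Fin n) := ⟨⟨0, hn⟩⟩
  set ω : ℝ := (volume (Metric.ball (0 : EuclideanSpace ℝ (Fin n)) 1)).toReal with hω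
  have hωfin : volume (Metric.ball (0 : EuclideanSpace ℝ (Fin n)) 1) ≠ ⊤ :=
    measure_ball_lt_top.ne
  have hωpos : 0 < ω := ENNReal.toReal_pos (Metric.measure_ball_pos _ _ one_pos).ne' hωfin
  have hball : ∀ (x : EuclideanSpace ℝ (Fin n)) (r : ℝ), 0 ≤ r →
      volume (Metric.closedBall x r) = ENNReal.ofReal (r ^ n * ω) := by
    intro x r hr
    rw [Measure.addHaar_closedBall _ _ hr, ENNReal.ofReal_mul (by positivity), hω,
      ENNReal.ofReal_toReal hωfin]
    simp
  refine ⟨5 ^ n * ω / μ, by positivity, ?_⟩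
  intro E F z R hR hE hEB hprop hB
  have hdens := Besicovitch.ae_tendsto_measure_inter_div_of_measurableSet
    (volume : Measure (EuclideanSpace ℝ (Fin n))) hE
  set T : Set (EuclideanSpace ℝ (Fin n)) := {x | x ∈ E ∧ x ∈ Metric.ball z R ∧
    Filter.Tendsto (fun r => volume (E ∩ Metric.closedBall x r) / volume (Metric.closedBall x r))
      (nhdsWithin 0 (Set.Ioi 0)) (nhds (E.indicator 1 x))} with hT
  have hET : volume E ≤ volume T := by
    apply measure_mono_ae
    have hs : ∀ᵐ x ∂(volume : Measure (EuclideanSpace ℝ (Fin n))), x ∉ Metric.sphere z R := by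
      rw [← MeasureTheory.measure_eq_zero_iff_ae_notMem]
      exact Measure.addHaar_sphere _ _ _
    filter_upwards [hdens, hs] with x h1 h2 hxE
    refine ⟨hxE, ?_, h1⟩
    have := hEB hxE
    rw [Metric.mem_closedBall] at this
    rw [Metric.mem_ball]
    exact lt_of_le_of_ne this h2
  have hsel : ∀ x ∈ T, ∃ (y' : EuclideanSpace ℝ (Fin n)) (r' : ℝ), 0 < r' ∧ r' ≤ R ∧
      x ∈ Metric.closedBall y' r' ∧ Metric.closedBall y' r' ⊆ F ∧
        ENNReal.ofReal (μ * r' ^ n) ≤ volume (Metric.closedBall y' r' \ E) := by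
    rintro x ⟨hxE, hxB, hlim⟩
    rw [Set.indicator_of_mem hxE, Pi.one_apply] at hlim
    set θ : ℝ := min (1 / 2) (μ / (2 * ω)) with hθ
    have hθ0 : 0 < θ := by positivity
    have hθ1 : θ ≤ 1 / 2 := min_le_left _ _
    have hlt : ENNReal.ofReal (1 - θ) < 1 := by
      rw [← ENNReal.ofReal_one]
      exact (ENNReal.ofReal_lt_ofReal_iff one_pos).2 (by linarith)
    have hev := hlim.eventually_const_lt hlt
    have hxB' : 0 < R - dist x z := by rw [Metric.mem_ball] at hxB; linarith
    have hev2 : ∀ᶠ r in nhdsWithin (0 : ℝ) (Set.Ioi 0), r < R - dist x z :=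
      (eventually_lt_nhds hxB').filter_mono nhdsWithin_le_nhds
    have hev3 : ∀ᶠ r in nhdsWithin (0 : ℝ) (Set.Ioi 0), 0 < r := self_mem_nhdsWithin
    obtain ⟨r, ⟨h1, h2⟩, h3⟩ := ((hev.and hev2).and hev3).exists
    have hgood : volume (Metric.closedBall x r \ E) < ENNReal.ofReal (μ * r ^ n) := by
      have hv := hball x r h3.le
      have hrn : 0 < r ^ n * ω := by positivity
      rw [hv, ENNReal.lt_div_iff_mul_lt (Or.inl (by simpa using hrn))
        (Or.inl ENNReal.ofReal_ne_top), ← ENNReal.ofReal_mul (by linarith)] at h1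
      have h4 := measure_inter_add_sdiff (μ := (volume : Measure (EuclideanSpace ℝ (Fin n))))
        (Metric.closedBall x r) hE
      rw [hv, Set.inter_comm] at h4
      have hfin : volume (E ∩ Metric.closedBall x r) ≠ ⊤ := by
        refine ne_top_of_le_ne_top (b := ENNReal.ofReal (r ^ n * ω)) ENNReal.ofReal_ne_top ?_
        rw [← h4]; exact le_self_add
      have h5 : volume (Metric.closedBall x r \ E) =
        ENNReal.ofReal (r ^ n * ω) - volume (E ∩ Metric.closedBall x r) := by
          rw [← h4, ENNReal.add_sub_cancel_left hfin]
      rw [h5]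
      calc ENNReal.ofReal (r ^ n * ω) - volume (E ∩ Metric.closedBall x r)
          ≤ ENNReal.ofReal (r ^ n * ω) - ENNReal.ofReal ((1 - θ) * (r ^ n * ω)) :=
            tsub_le_tsub_left h1.le _
        _ = ENNReal.ofReal (r ^ n * ω - (1 - θ) * (r ^ n * ω)) :=
            (ENNReal.ofReal_sub _ (mul_nonneg (by linarith) hrn.le)).symm
        _ < _ := by
            rw [ENNReal.ofReal_lt_ofReal_iff (by positivity)]
            have h6 : θ * ω ≤ μ / 2 := by
              calc θ * ω ≤ μ / (2 * ω) * ω := by gcongr; exact min_le_right _ _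
                _ = _ := by field_simp
            have h7 : 0 < r ^ n := by positivity
            nlinarith
    obtain ⟨k, hk⟩ := pow_unbounded_of_one_lt (R / (2 * r)) (by norm_num : (1 : ℝ) < 2)
    refine doubling hprop hB (hEB hxE) k x r h3 ?_ (Metric.mem_closedBall_self h3.le) hgood ?_
    · rw [← dist_eq_norm]; linarith
    · rwa [div_lt_iff₀ (by positivity)] at hk
  choose! cy cr hcr0 hcrR hcx hcF hcE using hsel
  obtain ⟨U, hUT, hUd, hUc⟩ := Vitali.exists_disjoint_subfamily_covering_enlargement_closedBall
    T cy cr R hcrR 5 (by norm_num)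
  have hUcount : U.Countable := by
    refine hUd.countable_of_nonempty_interior ?_
    intro a ha
    refine ⟨cy a, Metric.ball_subset_interior_closedBall (Metric.mem_ball_self (hcr0 a (hUT ha)))⟩
  have hTsub : T ⊆ ⋃ a ∈ U, Metric.closedBall (cy a) (5 * cr a) := by
    intro x hx
    obtain ⟨a, ha, hsub⟩ := hUc x hx
    exact Set.mem_iUnion₂.2 ⟨a, ha, hsub (hcx x hx)⟩
  have := hUcount.to_subtype
  calc volume E ≤ volume T := hET
    _ ≤ volume (⋃ a ∈ U, Metric.closedBall (cy a) (5 * cr a)) := measure_mono hTsub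
    _ ≤ ∑' a : U, volume (Metric.closedBall (cy a) (5 * cr a)) :=
        measure_biUnion_le _ hUcount _
    _ ≤ ∑' a : U, ENNReal.ofReal (5 ^ n * ω / μ) * volume (Metric.closedBall (cy a) (cr a) \ E) := by
        refine ENNReal.tsum_le_tsum fun a => ?_
        have h0 := hcr0 a (hUT a.2)
        rw [hball _ _ (by positivity)]
        calc ENNReal.ofReal ((5 * cr a) ^ n * ω)
            = ENNReal.ofReal (5 ^ n * ω / μ) * ENNReal.ofReal (μ * (cr a) ^ n) := by
              rw [← ENNReal.ofReal_mul (by positivity), mul_pow]; congr 1; field_simp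
          _ ≤ _ := by gcongr; exact hcE a (hUT a.2)
    _ = ENNReal.ofReal (5 ^ n * ω / μ) * ∑' a : U, volume (Metric.closedBall (cy a) (cr a) \ E) :=
        ENNReal.tsum_mul_left
    _ = ENNReal.ofReal (5 ^ n * ω / μ) * volume (⋃ a ∈ U, Metric.closedBall (cy a) (cr a) \ E) := by
        congr 1
        refine (measure_biUnion (f := fun a => Metric.closedBall (cy a) (cr a) \ E)
          hUcount ?_ ?_).symm
        · intro a ha b hb hab
          exact (hUd ha hb hab).mono Set.sdiff_subset Set.sdiff_subset
        · intro a _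
          exact Metric.isClosed_closedBall.measurableSet.diff hE
    _ ≤ _ := by
        gcongr
        refine Set.iUnion₂_subset fun a ha => ?_
        exact Set.sdiff_subset_sdiff_left (hcF a (hUT ha))

end CBH

namespace CBH
variable {n : ℕ}

lemma meas_superlevel {u : EuclideanSpace ℝ (Fin n) → ℝ} {z : EuclideanSpace ℝ (Fin n)} {R : ℝ}
    (hu : ContinuousOn u (Metric.closedBall z R)) (c : ℝ) :
    MeasurableSet {x | x ∈ Metric.closedBall z R ∧ c < u x} := by
  have h1 : IsClosed (Metric.closedBall z R ∩ u ⁻¹' Set.Iic c) :=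
    hu.preimage_isClosed_of_isClosed Metric.isClosed_closedBall isClosed_Iic
  have h2 : {x | x ∈ Metric.closedBall z R ∧ c < u x} =
      Metric.closedBall z R \ (Metric.closedBall z R ∩ u ⁻¹' Set.Iic c) := by
    ext x
    simp only [Set.mem_ofPred_eq, Set.mem_sdiff, Set.mem_inter_iff, Set.mem_preimage, Set.mem_Iic,
      not_and, not_le]
    exact ⟨fun h => ⟨h.1, fun _ => h.2⟩, fun h => ⟨h.1, h.2 h.1⟩⟩
  rw [h2]
  exact Metric.isClosed_closedBall.measurableSet.diff h1.measurableSet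

/-- Volume of the unit ball. -/
noncomputable def om (n : ℕ) : ℝ :=
  (volume (Metric.ball (0 : EuclideanSpace ℝ (Fin n)) 1)).toReal

lemma om_pos (n : ℕ) : 0 < om n :=
  ENNReal.toReal_pos (Metric.measure_ball_pos _ _ one_pos).ne' measure_ball_lt_top.ne

lemma vol_closedBall (hn : 1 ≤ n) (x : EuclideanSpace ℝ (Fin n)) {r : ℝ} (hr : 0 ≤ r) :
    volume (Metric.closedBall x r) = ENNReal.ofReal (om n * r ^ n) := by
  have : Nonempty (Fin n) := ⟨⟨0, hn⟩⟩
  rw [Measure.addHaar_closedBall _ _ hr, mul_comm, ENNReal.ofReal_mul (om_pos n).le, om,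
    ENNReal.ofReal_toReal measure_ball_lt_top.ne]
  simp

lemma weakH (n : ℕ) {lam Lam : ℝ} (hn : 1 ≤ n) (hlam : 0 < lam) (hLam : lam ≤ Lam) :
    ∃ ε > 0, ∀ η > 0, ∃ T ≥ 1, ∀ (u b : EuclideanSpace ℝ (Fin n) → ℝ)
      (z x1 : EuclideanSpace ℝ (Fin n)) (R m : ℝ), 0 < R → 0 < m →
      ContinuousOn u (Metric.closedBall z (4 * R)) →
      (∀ x ∈ Metric.closedBall z (4 * R), 0 ≤ u x ∧ 0 ≤ b x ∧ Sup n lam Lam (b x) 0 0 u x) →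
      (∫⁻ x in Metric.closedBall z (4 * R), ENNReal.ofReal (b x ^ n)) ≤ ENNReal.ofReal ε →
      x1 ∈ Metric.closedBall z R → u x1 ≤ m →
      volume {x | x ∈ Metric.closedBall z R ∧ T * m < u x} ≤ ENNReal.ofReal (η * R ^ n) := by
  obtain ⟨μ, hμ, ε, hε, M, hM, hbasic⟩ := basic n hn hlam hLam
  obtain ⟨C, hC, hink⟩ := inkspots n hn hμ
  refine ⟨ε, hε, fun η hη => ?_⟩
  have hq1 : C / (1 + C) < 1 := by rw [div_lt_one (by positivity)]; linarith
  obtain ⟨k, hk⟩ := exists_pow_lt_of_lt_one (div_pos hη (om_pos n)) hq1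
  refine ⟨M ^ k, one_le_pow₀ hM.le, ?_⟩
  intro u b z x1 R m hR hm hu hsup hdrInt hx1 hux1
  have huB : ContinuousOn u (Metric.closedBall z R) :=
    hu.mono (Metric.closedBall_subset_closedBall (by linarith))
  set E : ℕ → Set (EuclideanSpace ℝ (Fin n)) :=
    fun k => {x | x ∈ Metric.closedBall z R ∧ M ^ k * m < u x} with hE
  have hEm : ∀ k, MeasurableSet (E k) := fun k => meas_superlevel huB _
  have hEB : ∀ k, E k ⊆ Metric.closedBall z R := fun k x hx => hx.1
  have hEfin : ∀ k, volume (E k) ≠ ⊤ := fun k =>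
    ((measure_mono (hEB k)).trans_lt (isCompact_closedBall z R).measure_lt_top).ne
  have hprop : ∀ k, ∀ (y : EuclideanSpace ℝ (Fin n)) (r : ℝ), 0 < r → ‖y - z‖ + r ≤ R →
      ∀ x1 ∈ Metric.closedBall y (3 * r), u x1 ≤ M ^ k * m →
      ENNReal.ofReal (μ * r ^ n) ≤ volume (Metric.closedBall y r \ E (k + 1)) := by
    intro k y r hr hyr p hp hup
    have hM0 : 0 < M ^ k * m := by positivity
    have hsub : Metric.closedBall y (4 * r) ⊆ Metric.closedBall z (4 * R) := by
      refine Metric.closedBall_subset_closedBall' ?_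
      rw [dist_eq_norm]; linarith [norm_nonneg (y - z)]
    have h := hbasic (fun x => (M ^ k * m)⁻¹ * u x) b y p r hr
      (continuousOn_const.mul (hu.mono hsub))
      (fun x hx => by
        obtain ⟨h1, h2, h3⟩ := hsup x (hsub hx)
        exact ⟨by positivity, h2, h3.const_mul (by positivity)⟩)
      ((lintegral_mono_set hsub).trans hdrInt) hp
      (by rw [inv_mul_le_iff₀ hM0]; linarith)
    refine (ENNReal.ofReal_le_of_le_toReal h).trans (measure_mono ?_)
    rintro x ⟨hx1, hx2⟩
    refine ⟨hx1, fun hx3 => ?_⟩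
    rw [inv_mul_le_iff₀ hM0] at hx2
    have := hx3.2
    rw [pow_succ] at this
    nlinarith
  have hstep : ∀ k, (volume (E (k + 1))).toReal ≤ C / (1 + C) * (volume (E k)).toReal := by
    intro k
    have h1 := hink (E (k + 1)) (E k) z R hR (hEm _) (hEB _)
      (fun y r hr hyr p hp hpB hpE => hprop k y r hr hyr p hp (by
        by_contra hcon
        exact hpE ⟨hpB, not_le.1 hcon⟩))
      (hprop k z R hR (by simp) x1 (Metric.closedBall_subset_closedBall (by linarith) hx1)
        (hux1.trans (by
          have := one_le_pow₀ hM.le (n := k)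
          nlinarith)))
    have hsub : E (k + 1) ⊆ E k := fun x hx => ⟨hx.1, lt_of_le_of_lt (by
      rw [pow_succ]
      have : 0 < M ^ k * m := by positivity
      nlinarith) hx.2⟩
    rw [measure_sdiff hsub (hEm _).nullMeasurableSet (hEfin _)] at h1
    have h2 := ENNReal.toReal_mono (ENNReal.mul_ne_top ENNReal.ofReal_ne_top
      (ENNReal.sub_ne_top (hEfin k))) h1
    rw [ENNReal.toReal_mul, ENNReal.toReal_ofReal hC.le,
      ENNReal.toReal_sub_of_le (measure_mono hsub) (hEfin k)] at h2
    rw [div_mul_eq_mul_div, le_div_iff₀ (by positivity)]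
    nlinarith
  have hiter : ∀ k, (volume (E k)).toReal ≤ (C / (1 + C)) ^ k * (om n * R ^ n) := by
    intro k
    induction k with
    | zero =>
      rw [pow_zero, one_mul]
      refine ENNReal.toReal_le_of_le_ofReal (by have := om_pos n; positivity) ?_
      rw [← vol_closedBall hn z hR.le]
      exact measure_mono (hEB 0)
    | succ k ih =>
      refine (hstep k).trans ?_
      rw [pow_succ']
      rw [mul_assoc]
      gcongr
  have hfin := hiter k
  rw [ENNReal.le_ofReal_iff_toReal_le (hEfin k) (by positivity)]
  refine hfin.trans ?_
  rw [lt_div_iff₀ (om_pos n)] at hk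
  have : 0 < R ^ n := by positivity
  nlinarith

end CBH

namespace CBH
variable {n : ℕ}

/-- Nonnegative solutions in the half ball, extended by zero. -/
structure Sol (n : ℕ) (hn : 1 ≤ n) (lam Lam s a : ℝ) (b u : EuclideanSpace ℝ (Fin n) → ℝ) :
    Prop where
  cont : ContinuousOn u (Metric.ball 0 2)
  zero : ∀ x, lastC n hn x ≤ 0 → u x = 0
  pos : ∀ x ∈ halfBall n hn 2, 0 < u x
  bnn : ∀ x ∈ halfBall n hn 2, 0 ≤ b x
  sup : ∀ x ∈ halfBall n hn 2, Sup n lam Lam (b x) 0 0 u x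
  sub : ∀ x ∈ halfBall n hn 2, Sup n lam Lam (b x) 0 0 (fun y => -u y) x
  drift : ∀ (S : Set (EuclideanSpace ℝ (Fin n))) (y : EuclideanSpace ℝ (Fin n)) (R : ℝ), 0 < R →
    S ⊆ Metric.closedBall y R → S ⊆ halfBall n hn 2 →
    (∫⁻ x in S, ENNReal.ofReal (b x ^ n)) ≤ ENNReal.ofReal ((s * R ^ a) ^ n)

lemma lastC_cont (hn : 1 ≤ n) : Continuous (lastC n hn) := by
  unfold lastC; fun_prop

lemma halfBall_open (hn : 1 ≤ n) (R : ℝ) : IsOpen (halfBall n hn R) :=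
  (isOpen_lt continuous_norm continuous_const).inter
    (isOpen_lt continuous_const (lastC_cont hn))

lemma drift_bound (hn : 1 ≤ n) {q K : ℝ} (hq : (n : ℝ) < q) (hK : 0 < K)
    {b : EuclideanSpace ℝ (Fin n) → ℝ}
    (hb : ContinuousOn b (halfBall n hn 2)) (hb0 : ∀ x ∈ halfBall n hn 2, 0 ≤ b x)
    (hbK : LpNormE n q b (halfBall n hn 2) ≤ ENNReal.ofReal K)
    (S : Set (EuclideanSpace ℝ (Fin n))) (y : EuclideanSpace ℝ (Fin n)) (R : ℝ) (hR : 0 < R)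
    (hS1 : S ⊆ Metric.closedBall y R) (hS2 : S ⊆ halfBall n hn 2) :
    (∫⁻ x in S, ENNReal.ofReal (b x ^ n)) ≤
      ENNReal.ofReal (((K * (om n) ^ ((1 - n / q) / n)) * R ^ (1 - n / q)) ^ n) := by
  have hn0 : (0 : ℝ) < n := by exact_mod_cast hn
  have hq0 : 0 < q := hn0.trans hq
  set a : ℝ := 1 - n / q with ha
  have ha0 : 0 < a := by rw [ha, sub_pos, div_lt_one hq0]; exact hq
  set S' := Metric.closedBall y R ∩ halfBall n hn 2 with hS'
  have hS'm : MeasurableSet S' :=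
    Metric.isClosed_closedBall.measurableSet.inter (halfBall_open hn 2).measurableSet
  refine (lintegral_mono_set (Set.subset_inter hS1 hS2)).trans ?_
  have hconj : (q / n).HolderConjugate (1 / a) := by
    rw [Real.holderConjugate_iff]
    refine ⟨by rw [lt_div_iff₀ hn0]; linarith, ?_⟩
    rw [ha]; simp
  have hbm : AEMeasurable (fun x => ENNReal.ofReal (b x ^ n)) (volume.restrict S') := by
    refine ENNReal.measurable_ofReal.comp_aemeasurable ?_
    exact ((hb.mono Set.inter_subset_right).pow n).aemeasurable hS'm
  have h1 := ENNReal.lintegral_mul_le_Lp_mul_Lq (volume.restrict S') hconj hbm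
    (aemeasurable_const (b := (1 : ℝ≥0∞)))
  simp only [Pi.mul_apply, mul_one, ENNReal.one_rpow, lintegral_const, one_mul, one_div_div,
    Measure.restrict_apply MeasurableSet.univ, Set.univ_inter] at h1
  refine h1.trans ?_
  have h2 : (∫⁻ x in S', ENNReal.ofReal (b x ^ n) ^ (q / n)) ^ (n / q) ≤ ENNReal.ofReal (K ^ n) := by
    have e1 : (∫⁻ x in S', ENNReal.ofReal (b x ^ n) ^ (q / n)) =
        ∫⁻ x in S', ENNReal.ofReal (|b x| ^ q) := by
      refine setLIntegral_congr_fun hS'm ?_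
      intro x hx
      have hbx := hb0 x hx.2
      simp only
      rw [ENNReal.ofReal_rpow_of_nonneg (by positivity) (by positivity), abs_of_nonneg hbx,
        ← Real.rpow_natCast, ← Real.rpow_mul hbx]
      congr 2; field_simp
    rw [e1]
    have e2 : (∫⁻ x in S', ENNReal.ofReal (|b x| ^ q)) ^ ((n : ℝ) / q) ≤
        (LpNormE n q b (halfBall n hn 2)) ^ (n : ℝ) := by
      unfold LpNormE
      rw [← ENNReal.rpow_mul, one_div_mul_eq_div]
      exact ENNReal.rpow_le_rpow (lintegral_mono_set Set.inter_subset_right) (by positivity)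
    refine e2.trans ?_
    rw [ENNReal.rpow_natCast, ENNReal.ofReal_pow hK.le]
    gcongr
  have h3 : (volume S') ^ a ≤ ENNReal.ofReal ((om n * R ^ n) ^ a) := by
    have := om_pos n
    rw [← ENNReal.ofReal_rpow_of_nonneg (by positivity) ha0.le, ← vol_closedBall hn y hR.le]
    exact ENNReal.rpow_le_rpow (measure_mono Set.inter_subset_left) ha0.le
  have hom := om_pos n
  calc _ ≤ ENNReal.ofReal (K ^ n) * ENNReal.ofReal ((om n * R ^ n) ^ a) := by
        refine mul_le_mul' h2 ?_
        simpa using h3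
    _ = _ := by
        rw [← ENNReal.ofReal_mul (by positivity), mul_pow, mul_pow]
        congr 1
        rw [mul_assoc]; congr 1
        rw [Real.mul_rpow hom.le (by positivity), ← Real.rpow_natCast, ← Real.rpow_natCast,
          ← Real.rpow_natCast, ← Real.rpow_mul hom.le, ← Real.rpow_mul hR.le, ← Real.rpow_mul hR.le]
        congr 1
        · congr 1; field_simp
        · congr 1; ring

open Classical in
/-- Extension by zero to the lower half space. -/
noncomputable def ext0 (n : ℕ) (hn : 1 ≤ n) (u : EuclideanSpace ℝ (Fin n) → ℝ) :
    EuclideanSpace ℝ (Fin n) → ℝ := fun x => if 0 < lastC n hn x then u x else 0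

lemma sol_of (hn : 1 ≤ n) {lam Lam q K : ℝ} (hLam : lam ≤ Lam) (hq : (n : ℝ) < q)
    (hK : 0 < K) {b u : EuclideanSpace ℝ (Fin n) → ℝ}
    (hb : ContinuousOn b (halfBall n hn 2)) (hb0 : ∀ x ∈ halfBall n hn 2, 0 ≤ b x)
    (hbK : LpNormE n q b (halfBall n hn 2) ≤ ENNReal.ofReal K)
    (hu : ContinuousOn u (halfBall n hn 2 ∪ flatB n hn 2))
    (hu2 : ContDiffOn ℝ 2 u (halfBall n hn 2))
    (hm : ∀ x ∈ halfBall n hn 2, pucciMinus n lam Lam (hess n u x) - b x * gradNorm n u x ≤ 0)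
    (hp : ∀ x ∈ halfBall n hn 2, 0 ≤ pucciPlus n lam Lam (hess n u x) + b x * gradNorm n u x)
    (hpos : ∀ x ∈ halfBall n hn 2, 0 < u x) (hz : ∀ x ∈ flatB n hn 2, u x = 0) :
    Sol n hn lam Lam (K * (om n) ^ ((1 - n / q) / n)) (1 - n / q) b (ext0 n hn u) := by
  have hop := halfBall_open hn 2
  have hcong : ∀ x ∈ halfBall n hn 2, u =ᶠ[nhds x] ext0 n hn u := by
    intro x hx
    filter_upwards [hop.mem_nhds hx] with y hy
    exact (if_pos hy.2).symm
  have hC2 : ∀ x ∈ halfBall n hn 2, ContDiffAt ℝ 2 u x := fun x hx =>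
    hu2.contDiffAt (hop.mem_nhds hx)
  refine ⟨?_, ?_, ?_, hb0, ?_, ?_, ?_⟩
  · intro x hx
    rw [mem_ball_zero_iff] at hx
    by_cases h1 : 0 < lastC n hn x
    · have hxh : x ∈ halfBall n hn 2 := ⟨hx, h1⟩
      exact (((hC2 x hxh).continuousAt).congr (hcong x hxh)).continuousWithinAt
    · have hx0 : ext0 n hn u x = 0 := if_neg h1
      have hsub : Metric.ball (0 : EuclideanSpace ℝ (Fin n)) 2 ⊆
          halfBall n hn 2 ∪ {y | lastC n hn y ≤ 0} := by
        intro y hy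
        rw [mem_ball_zero_iff] at hy
        by_cases h : 0 < lastC n hn y
        · exact Or.inl ⟨hy, h⟩
        · exact Or.inr (not_lt.1 h)
      refine ContinuousWithinAt.mono (ContinuousWithinAt.union ?_ ?_) hsub
      · rcases lt_or_eq_of_le (not_lt.1 h1) with h2 | h2
        · have : ext0 n hn u =ᶠ[nhds x] fun _ => 0 := by
            filter_upwards [(isOpen_lt (lastC_cont hn) continuous_const).mem_nhds h2] with y hy
            exact if_neg (not_lt.2 (le_of_lt hy))
          exact (continuousAt_const.congr this.symm).continuousWithinAt
        · have hxf : x ∈ flatB n hn 2 := ⟨hx.le, h2⟩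
          have h3 := (hu x (Or.inr hxf)).mono
            (Set.subset_union_left : halfBall n hn 2 ⊆ _)
          refine h3.congr (fun y hy => if_pos hy.2) ?_
          rw [hx0, hz x hxf]
      · exact (continuousWithinAt_const (b := (0 : ℝ))).congr (fun y hy => if_neg (not_lt.2 hy)) hx0
  · intro x hx
    exact if_neg (not_lt.2 hx)
  · intro x hx
    have : ext0 n hn u x = u x := if_pos hx.2
    rw [this]; exact hpos x hx
  · intro x hx
    refine Sup.congr ⟨hC2 x hx, fun η hη => ?_⟩ (hcong x hx)
    have h1 := hm x hx
    obtain ⟨A, hA, h2⟩ := pucciMinus_ex hLam (sub_nonpos.1 h1) hη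
    exact ⟨A, hA, by simpa [gradNorm] using h2⟩
  · intro x hx
    have h0 : Sup n lam Lam (b x) 0 0 (fun y => -u y) x := by
      refine ⟨(hC2 x hx).neg, fun η hη => ?_⟩
      obtain ⟨A, hA, h2⟩ := pucciPlus_ex hLam (hp x hx) hη
      refine ⟨A, hA, ?_⟩
      have h3 : hess n (fun y => -u y) x = - hess n u x := by
        have := hess_const_mul (-1) (hC2 x hx)
        simpa using this
      rw [h3, fderiv_fun_neg, norm_neg]
      simpa [gradNorm] using h2
    refine h0.congr ?_
    filter_upwards [hcong x hx] with y hy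
    rw [hy]
  · exact drift_bound hn hq hK hb hb0 hbK

end CBH

namespace CBH
variable {n : ℕ}

lemma small_drift {s a ε : ℝ} (hn : 1 ≤ n) (hs : 0 < s) (ha : 0 < a) (hε : 0 < ε) :
    ∃ R0 > 0, ∀ R, 0 < R → R ≤ R0 → (s * R ^ a) ^ n ≤ ε := by
  set δ := min ε 1 with hδ
  have hδ0 : 0 < δ := by positivity
  refine ⟨(δ / s) ^ (1 / a), by positivity, fun R hR hRR => ?_⟩
  have h1 : R ^ a ≤ δ / s := by
    calc R ^ a ≤ ((δ / s) ^ (1 / a)) ^ a := Real.rpow_le_rpow hR.le hRR ha.le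
      _ = δ / s := by
        rw [← Real.rpow_mul (by positivity), one_div_mul_cancel ha.ne', Real.rpow_one]
  have h2 : s * R ^ a ≤ δ := by rw [le_div_iff₀ hs] at h1; linarith
  calc (s * R ^ a) ^ n ≤ δ ^ n := pow_le_pow_left₀ (by positivity) h2 n
    _ ≤ δ ^ 1 := pow_le_pow_of_le_one hδ0.le (min_le_right _ _) hn
    _ ≤ ε := by rw [pow_one]; exact min_le_left _ _

lemma weakH_sol (hn : 1 ≤ n) {lam Lam s a : ℝ} (hlam : 0 < lam) (hLam : lam ≤ Lam) (hs : 0 < s)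
    (ha : 0 < a) : ∃ R0 > 0, ∀ η > 0, ∃ T ≥ 1, ∀ (b u : EuclideanSpace ℝ (Fin n) → ℝ),
      Sol n hn lam Lam s a b u → ∀ (z x1 : EuclideanSpace ℝ (Fin n)) (R m : ℝ), 0 < R → R ≤ R0 →
      0 < m → Metric.closedBall z (4 * R) ⊆ halfBall n hn 2 → x1 ∈ Metric.closedBall z R →
      u x1 ≤ m →
      volume {x | x ∈ Metric.closedBall z R ∧ T * m < u x} ≤ ENNReal.ofReal (η * R ^ n) := by
  obtain ⟨ε, hε, hw⟩ := weakH n hn hlam hLam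
  obtain ⟨R0, hR0, hdr⟩ := small_drift (n := n) hn hs ha hε
  refine ⟨R0 / 4, by positivity, fun η hη => ?_⟩
  obtain ⟨T, hT, hw⟩ := hw η hη
  refine ⟨T, hT, fun b u hS z x1 R m hR hRR hm hsub hx1 hux1 => ?_⟩
  refine hw u b z x1 R m hR hm (hS.cont.mono fun x hx => ?_) (fun x hx => ?_) ?_ hx1 hux1
  · rw [mem_ball_zero_iff]; exact (hsub hx).1
  · exact ⟨(hS.pos x (hsub hx)).le, hS.bnn x (hsub hx), hS.sup x (hsub hx)⟩
  · refine (hS.drift _ z (4 * R) (by linarith) subset_rfl hsub).trans (ENNReal.ofReal_le_ofReal ?_)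
    exact hdr (4 * R) (by linarith) (by linarith)

lemma chain_step (hn : 1 ≤ n) {lam Lam s a : ℝ} (hlam : 0 < lam) (hLam : lam ≤ Lam) (hs : 0 < s)
    (ha : 0 < a) : ∃ R0 > 0, ∃ T ≥ 2, ∀ (b u : EuclideanSpace ℝ (Fin n) → ℝ),
      Sol n hn lam Lam s a b u → ∀ (z y : EuclideanSpace ℝ (Fin n)) (ρ m : ℝ), 0 < ρ → ρ ≤ R0 →
      0 < m → Metric.closedBall z (4 * ρ) ⊆ halfBall n hn 2 →
      (∃ x ∈ Metric.closedBall z ρ, u x ≤ m) → ‖y - z‖ ≤ ρ / 2 →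
      ∃ x ∈ Metric.closedBall y (ρ / 2), u x ≤ T * m := by
  obtain ⟨R0, hR0, hw⟩ := weakH_sol hn hlam hLam hs ha
  have hom := om_pos n
  obtain ⟨T, hT, hw⟩ := hw (om n * (1 / 2) ^ n / 2) (by positivity)
  refine ⟨R0, hR0, max T 2, le_max_right _ _, ?_⟩
  rintro b u hS z y ρ m hρ hρR hm hsub ⟨x, hx, hux⟩ hyz
  by_contra hcon
  push Not at hcon
  have h1 := hw b u hS z x ρ m hρ hρR hm hsub hx hux
  have h2 : Metric.closedBall y (ρ / 2) ⊆ {x | x ∈ Metric.closedBall z ρ ∧ T * m < u x} := by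
    intro p hp
    refine ⟨?_, lt_of_le_of_lt ?_ (hcon p hp)⟩
    · rw [Metric.mem_closedBall] at hp ⊢
      have := dist_triangle p y z
      rw [dist_eq_norm y z] at this
      linarith
    · exact mul_le_mul_of_nonneg_right (le_max_left _ _) hm.le
  have h3 := (measure_mono h2).trans h1
  rw [vol_closedBall hn y (by positivity), ENNReal.ofReal_le_ofReal_iff (by positivity)] at h3
  have e : om n * (ρ / 2) ^ n = om n * (1 / 2) ^ n * ρ ^ n := by
    rw [mul_assoc, ← mul_pow]; congr 2; ring
  have : 0 < om n * (1 / 2) ^ n * ρ ^ n := by positivity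
  rw [e] at h3
  linarith

lemma lastC_sub_le (hn : 1 ≤ n) (x y : EuclideanSpace ℝ (Fin n)) :
    |lastC n hn x - lastC n hn y| ≤ ‖x - y‖ := abs_coord_le (x - y) _

lemma lastC_add_smul (hn : 1 ≤ n) (x y : EuclideanSpace ℝ (Fin n)) (t : ℝ) :
    lastC n hn (x + t • (y - x)) = lastC n hn x + t * (lastC n hn y - lastC n hn x) := by
  simp [lastC]

lemma norm_seg_le {x y : EuclideanSpace ℝ (Fin n)} {t C : ℝ} (h0 : 0 ≤ t) (h1 : t ≤ 1)
    (hx : ‖x‖ ≤ C) (hy : ‖y‖ ≤ C) : ‖x + t • (y - x)‖ ≤ C := by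
  have e : x + t • (y - x) = (1 - t) • x + t • y := by module
  rw [e]
  refine (norm_add_le _ _).trans ?_
  rw [norm_smul, norm_smul, Real.norm_eq_abs, Real.norm_eq_abs, abs_of_nonneg h0,
    abs_of_nonneg (by linarith)]
  nlinarith

lemma ball_sub_half (hn : 1 ≤ n) {y : EuclideanSpace ℝ (Fin n)} {h ρ : ℝ} (hy : ‖y‖ ≤ 3 / 2)
    (hL : h ≤ lastC n hn y) (h1 : ρ < h) (h2 : ρ < 1 / 2) :
    Metric.closedBall y ρ ⊆ halfBall n hn 2 := by
  intro x hx
  rw [Metric.mem_closedBall, dist_eq_norm] at hx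
  refine ⟨?_, ?_⟩
  · have : ‖x‖ ≤ ‖x - y‖ + ‖y‖ := by simpa using norm_add_le (x - y) y
    linarith
  · have := abs_le.1 ((lastC_sub_le hn x y).trans hx)
    linarith [this.1]

/-- The reference point. -/
noncomputable def ept (n : ℕ) (hn : 1 ≤ n) : EuclideanSpace ℝ (Fin n) :=
  EuclideanSpace.single (⟨n - 1, by omega⟩ : Fin n) ((1 : ℝ) / 2)

lemma ept_norm (hn : 1 ≤ n) : ‖ept n hn‖ = 1 / 2 := by
  simp [ept]

lemma ept_lastC (hn : 1 ≤ n) : lastC n hn (ept n hn) = 1 / 2 := by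
  simp [ept, lastC]

lemma chain_seg (hn : 1 ≤ n) {R0 T : ℝ} (hT : 2 ≤ T)
    {u : EuclideanSpace ℝ (Fin n) → ℝ}
    (hstep : ∀ (z y : EuclideanSpace ℝ (Fin n)) (ρ m : ℝ), 0 < ρ → ρ ≤ R0 →
      0 < m → Metric.closedBall z (4 * ρ) ⊆ halfBall n hn 2 →
      (∃ x ∈ Metric.closedBall z ρ, u x ≤ m) → ‖y - z‖ ≤ ρ / 2 →
      ∃ x ∈ Metric.closedBall y (ρ / 2), u x ≤ T * m)
    {p q : EuclideanSpace ℝ (Fin n)} {ρ h m : ℝ} (hρ : 0 < ρ) (hρR : ρ ≤ R0)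
    (h1 : 4 * ρ < h) (h2 : 4 * ρ < 1 / 2) (hp : ‖p‖ ≤ 3 / 2) (hq : ‖q‖ ≤ 3 / 2)
    (hpL : h ≤ lastC n hn p) (hqL : h ≤ lastC n hn q) (hm : 0 < m)
    (hex : ∃ x ∈ Metric.closedBall p ρ, u x ≤ m) {N : ℕ} (hN : 6 ≤ N * ρ) :
    ∃ x ∈ Metric.closedBall q ρ, u x ≤ T ^ N * m := by
  have hN0 : (0 : ℝ) < N := by
    by_contra hcon
    have : (N : ℝ) * ρ ≤ 0 := mul_nonpos_of_nonpos_of_nonneg (not_lt.1 hcon) hρ.le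
    linarith
  have hT0 : 0 < T := by linarith
  have hclaim : ∀ k : ℕ, k ≤ N → ∃ x ∈ Metric.closedBall (p + ((k : ℝ) / N) • (q - p)) ρ,
      u x ≤ T ^ k * m := by
    intro k
    induction k with
    | zero => intro _; simpa using hex
    | succ k ih =>
      intro hk
      have hkN : ((k : ℝ)) / N ≤ 1 := by
        rw [div_le_one hN0]; exact_mod_cast (by omega : k ≤ N)
      have hk0 : 0 ≤ (k : ℝ) / N := by positivity
      obtain ⟨x, hx, hux⟩ := hstep (p + ((k : ℝ) / N) • (q - p))
        (p + (((k + 1 : ℕ) : ℝ) / N) • (q - p)) ρ (T ^ k * m) hρ hρR (by positivity)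
        (ball_sub_half hn (h := h) (norm_seg_le hk0 hkN hp hq) (by
          rw [lastC_add_smul]; nlinarith) h1 h2) (ih (by omega)) (by
          have e : (p + (((k + 1 : ℕ) : ℝ) / N) • (q - p)) - (p + ((k : ℝ) / N) • (q - p)) =
              (1 / (N : ℝ)) • (q - p) := by
            push_cast; rw [add_div]; module
          rw [e, norm_smul, Real.norm_eq_abs, abs_of_pos (by positivity), one_div_mul_eq_div,
            div_le_iff₀ hN0]
          have : ‖q - p‖ ≤ 3 := (norm_sub_le _ _).trans (by linarith)
          linarith)
      refine ⟨x, Metric.closedBall_subset_closedBall (by linarith) hx, ?_⟩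
      rw [pow_succ']; linarith
  have := hclaim N le_rfl
  rw [div_self hN0.ne', one_smul, add_sub_cancel] at this
  exact this

lemma geo (hn : 1 ≤ n) {lam Lam s a : ℝ} (hlam : 0 < lam) (hLam : lam ≤ Lam) (hs : 0 < s)
    (ha : 0 < a) {R1 : ℝ} (hR1 : 0 < R1) : ∃ κ > 0, κ ≤ 1 / 16 ∧ κ ≤ R1 ∧ ∃ T ≥ 2, ∃ C0 ≥ 1,
      ∀ (b u : EuclideanSpace ℝ (Fin n) → ℝ), Sol n hn lam Lam s a b u →
      ∀ (m : ℕ) (y : EuclideanSpace ℝ (Fin n)), ‖y‖ ≤ 3 / 2 →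
      (1 - κ / 16) ^ m / 4 ≤ lastC n hn y →
      ∃ x ∈ Metric.closedBall y (κ * ((1 - κ / 16) ^ m / 4)),
        u x ≤ C0 * T ^ m * u (ept n hn) := by
  obtain ⟨R0, hR0, T, hT, hstep⟩ := chain_step hn hlam hLam hs ha
  set κ := min (1 / 16) (min R0 R1) with hκ
  have hκ0 : 0 < κ := by positivity
  have hκ1 : κ ≤ 1 / 16 := min_le_left _ _
  have hκ2 : κ ≤ R0 := (min_le_right _ _).trans (min_le_left _ _)
  have hκ3 : κ ≤ R1 := (min_le_right _ _).trans (min_le_right _ _)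
  obtain ⟨N, hN⟩ := exists_nat_ge (6 / (κ / 4))
  rw [div_le_iff₀ (by positivity)] at hN
  have hT1 : 1 ≤ T := by linarith
  have hT0 : 0 < T := by linarith
  refine ⟨κ, hκ0, hκ1, hκ3, T, hT, T ^ N, one_le_pow₀ hT1, ?_⟩
  intro b u hS m
  have hstep := hstep b u hS
  have heh : ept n hn ∈ halfBall n hn 2 := ⟨by rw [ept_norm]; norm_num, by rw [ept_lastC]; norm_num⟩
  have hue := hS.pos _ heh
  set θ := 1 - κ / 16 with hθ
  have hθ0 : 1 / 2 ≤ θ := by rw [hθ]; linarith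
  have hθ1 : θ ≤ 1 := by rw [hθ]; linarith
  induction m with
  | zero =>
    intro y hy hyL
    simp only [pow_zero, mul_one] at hyL ⊢
    have := chain_seg hn hT hstep (p := ept n hn)
      (q := y) (ρ := κ / 4) (h := 1 / 4) (m := u (ept n hn)) (by positivity) (by linarith)
      (by linarith) (by linarith) (by rw [ept_norm]; norm_num) hy (by rw [ept_lastC]; norm_num)
      hyL hue ⟨ept n hn, Metric.mem_closedBall_self (by positivity), le_rfl⟩ hN
    convert this using 3
    ring_nf
  | succ m ih =>
    intro y hy hyL
    set h := θ ^ m / 4 with hh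
    have hh0 : 0 < h := by positivity
    have hh1 : h ≤ 1 / 4 := by
      rw [hh]; have := pow_le_one₀ (n := m) (by linarith : 0 ≤ θ) hθ1; linarith
    have hh2 : θ ^ (m + 1) / 4 = θ * h := by rw [hh, pow_succ']; ring
    rw [hh2] at hyL ⊢
    have hz : ∃ z : EuclideanSpace ℝ (Fin n), ‖z‖ ≤ 3 / 2 ∧ h ≤ lastC n hn z ∧
        ‖y - z‖ ≤ κ * h / 2 := by
      by_cases hcase : h ≤ lastC n hn y
      · exact ⟨y, hy, hcase, by simp; positivity⟩
      · push Not at hcase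
        refine ⟨y + (κ * h / 4) • (ept n hn - y), ?_, ?_, ?_⟩
        · refine norm_seg_le (by positivity) (by nlinarith) hy (by rw [ept_norm]; norm_num)
        · rw [lastC_add_smul, ept_lastC]
          have h3 : 1 / 4 ≤ 1 / 2 - lastC n hn y := by linarith
          have h4 : κ * h / 4 * (1 / 4) ≤ κ * h / 4 * (1 / 2 - lastC n hn y) :=
            mul_le_mul_of_nonneg_left h3 (by positivity)
          have h5 : θ * h = h - κ * h / 16 := by rw [hθ]; ring
          linarith
        · have e : y - (y + (κ * h / 4) • (ept n hn - y)) = (κ * h / 4) • (y - ept n hn) := by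
            module
          rw [e, norm_smul, Real.norm_eq_abs, abs_of_pos (by positivity)]
          have : ‖y - ept n hn‖ ≤ 2 := (norm_sub_le _ _).trans (by rw [ept_norm]; linarith)
          calc κ * h / 4 * ‖y - ept n hn‖ ≤ κ * h / 4 * 2 := by gcongr
            _ = _ := by ring
    obtain ⟨z, hz1, hz2, hz3⟩ := hz
    have hκh : κ * h ≤ 1 / 16 * h := by gcongr
    have hκh' : κ * h ≤ κ * 1 := by gcongr; linarith
    obtain ⟨x, hx, hux⟩ := hstep z y (κ * h) (T ^ N * T ^ m * u (ept n hn)) (by positivity)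
      (by linarith) (by positivity)
      (ball_sub_half hn (h := h) hz1 hz2 (by linarith) (by linarith)) (ih z hz1 hz2) hz3
    refine ⟨x, Metric.closedBall_subset_closedBall ?_ hx, ?_⟩
    · have : 1 / 2 * (κ * h) ≤ θ * (κ * h) := by gcongr
      linarith
    · rw [pow_succ]
      calc _ ≤ _ := hux
        _ = _ := by ring

end CBH

namespace CBH
variable {n : ℕ}

lemma slab_vol (hn : 1 ≤ n) (x0 : EuclideanSpace ℝ (Fin n)) {r h : ℝ} (hr : 0 ≤ r) (hh : 0 ≤ h) :
    volume {x | x ∈ Metric.closedBall x0 r ∧ 0 < lastC n hn x ∧ lastC n hn x < h} ≤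
      ENNReal.ofReal ((2 * r) ^ (n - 1) * h) := by
  classical
  set l : Fin n := ⟨n - 1, by omega⟩ with hl
  set box : Fin n → Set ℝ :=
    fun i => if i = l then Set.Ioo 0 h else Set.Icc (x0 i - r) (x0 i + r) with hbox
  have hm : MeasurableSet (Set.univ.pi box) := by
    refine MeasurableSet.univ_pi fun i => ?_
    rw [hbox]; dsimp only
    split_ifs
    · exact measurableSet_Ioo
    · exact measurableSet_Icc
  have h1 : {x | x ∈ Metric.closedBall x0 r ∧ 0 < lastC n hn x ∧ lastC n hn x < h} ⊆
      (@WithLp.ofLp 2 (Fin n → ℝ)) ⁻¹' (Set.univ.pi box) := by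
    rintro x ⟨hx, hx1, hx2⟩ i -
    rw [hbox]; dsimp only
    split_ifs with hi
    · subst hi; exact ⟨hx1, hx2⟩
    · rw [Metric.mem_closedBall, dist_eq_norm] at hx
      have := abs_le.1 ((abs_coord_le (x - x0) i).trans hx)
      simp only [PiLp.sub_apply] at this
      exact ⟨by linarith [this.1], by linarith [this.2]⟩
  refine (measure_mono h1).trans ?_
  rw [(PiLp.volume_preserving_ofLp (Fin n)).measure_preimage hm.nullMeasurableSet, volume_pi_pi]
  have h2 : ∀ i, volume (box i) = if i = l then ENNReal.ofReal h else ENNReal.ofReal (2 * r) := by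
    intro i
    rw [hbox]; dsimp only
    split_ifs
    · simp
    · rw [Real.volume_Icc]; congr 1; ring
  simp_rw [h2]
  rw [Finset.prod_ite, Finset.prod_const, Finset.prod_const]
  have h3 : (Finset.univ.filter (fun i => i = l)).card = 1 := by
    rw [Finset.filter_eq' Finset.univ l]; simp
  have h4 : (Finset.univ.filter (fun i => ¬ i = l)).card = n - 1 := by
    rw [Finset.filter_not, Finset.card_sdiff_of_subset (Finset.filter_subset _ _), h3]; simp
  rw [h3, h4, pow_one, mul_comm, ← ENNReal.ofReal_pow (by positivity),
    ← ENNReal.ofReal_mul (by positivity)]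

lemma smallMeas (hn : 1 ≤ n) {lam Lam s a : ℝ} (hlam : 0 < lam) (hLam : lam ≤ Lam) (hs : 0 < s)
    (ha : 0 < a) : ∃ θ, 0 < θ ∧ θ < 1 ∧ ∃ T ≥ 2, ∀ μ > 0, ∃ t > 0, ∃ C1 > 0,
      ∀ (b u : EuclideanSpace ℝ (Fin n) → ℝ), Sol n hn lam Lam s a b u →
      ∀ (m : ℕ) (x0 : EuclideanSpace ℝ (Fin n)) (M : ℝ),
      Metric.closedBall x0 (θ ^ m / t) ⊆ Metric.closedBall 0 (3 / 2) →
      C1 * T ^ m * u (ept n hn) ≤ M →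
      volume {x | x ∈ Metric.closedBall x0 (θ ^ m / t) ∧ M / 2 < u x} ≤
        ENNReal.ofReal (μ * (θ ^ m / t) ^ n) := by
  obtain ⟨R0, hR0, hw⟩ := weakH_sol hn hlam hLam hs ha
  obtain ⟨κ, hκ0, hκ1, hκR, T, hT, C0, hC0, hgeo⟩ := geo hn hlam hLam hs ha hR0
  refine ⟨1 - κ / 16, by linarith, by linarith, T, hT, fun μ hμ => ?_⟩
  set θ := 1 - κ / 16 with hθ
  have hθ0 : 0 < θ := by rw [hθ]; linarith
  have hθ1 : θ ≤ 1 := by rw [hθ]; linarith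
  set t : ℝ := μ / 2 ^ n with ht
  have ht0 : 0 < t := by positivity
  obtain ⟨F, hFsub, hFfin, hcov⟩ := (isCompact_closedBall (0 : EuclideanSpace ℝ (Fin n))
    1).finite_cover_balls (e := κ * t / 2) (by positivity)
  set F' := hFfin.toFinset with hF'
  set η : ℝ := μ / (2 * (F'.card + 1) * (κ * t) ^ n) with hη
  have hη0 : 0 < η := by positivity
  obtain ⟨Tη, hTη, hw⟩ := hw η hη0
  have hT0 : 0 < T := by linarith
  refine ⟨4 * t, by positivity, 2 * Tη * C0, by positivity, ?_⟩
  intro b u hS m x0 M hsub hM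
  have heh : ept n hn ∈ halfBall n hn 2 := ⟨by rw [ept_norm]; norm_num, by rw [ept_lastC]; norm_num⟩
  have hue := hS.pos _ heh
  set h := θ ^ m / 4 with hh
  have hh0 : 0 < h := by positivity
  have hh1 : h ≤ 1 / 4 := by
    rw [hh]; have := pow_le_one₀ (n := m) hθ0.le hθ1; linarith
  set r := θ ^ m / (4 * t) with hr
  have hrh : t * r = h := by rw [hr, hh]; field_simp
  have hr0 : 0 < r := by positivity
  set m0 := C0 * T ^ m * u (ept n hn) with hm0
  have hm00 : 0 < m0 := by positivity
  have hMm : Tη * m0 ≤ M / 2 := by rw [hm0]; linarith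
  have hM0 : 0 < M := by nlinarith [mul_pos (by linarith : 0 < Tη) hm00]
  have hκh : κ * h ≤ 1 / 16 * h := by gcongr
  have hκh' : κ * h ≤ κ * 1 := by gcongr; linarith
  set P : EuclideanSpace ℝ (Fin n) → Set (EuclideanSpace ℝ (Fin n)) := fun c =>
    {x | x ∈ Metric.closedBall x0 r ∧ x ∈ Metric.ball (x0 + r • c) (κ * h / 2) ∧
      h ≤ lastC n hn x ∧ M / 2 < u x} with hP
  have hPv : ∀ c, volume (P c) ≤ ENNReal.ofReal (η * (κ * h) ^ n) := by
    intro c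
    rcases (P c).eq_empty_or_nonempty with he | ⟨y, hy1, hy2, hy3, hy4⟩
    · rw [he, measure_empty]; exact zero_le
    · have hyn : ‖y‖ ≤ 3 / 2 := by simpa using hsub hy1
      obtain ⟨x1, hx1, hux1⟩ := hgeo b u hS m y hyn hy3
      refine le_trans (measure_mono ?_) (hw b u hS y x1 (κ * h) m0 (by positivity) (by linarith)
        hm00 (ball_sub_half hn (h := h) hyn hy3 (by linarith) (by linarith)) hx1 hux1)
      rintro x ⟨-, hx2, -, hx4⟩
      refine ⟨?_, by linarith⟩
      rw [Metric.mem_ball] at hx2 hy2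
      rw [Metric.mem_closedBall]
      have := dist_triangle_right x y (x0 + r • c)
      linarith
  have hcover : {x | x ∈ Metric.closedBall x0 r ∧ M / 2 < u x} ⊆
      {x | x ∈ Metric.closedBall x0 r ∧ 0 < lastC n hn x ∧ lastC n hn x < h} ∪ ⋃ c ∈ F', P c := by
    rintro x ⟨hx1, hx2⟩
    have hL : 0 < lastC n hn x := by
      by_contra hcon
      rw [hS.zero x (not_lt.1 hcon)] at hx2
      linarith
    by_cases hLh : lastC n hn x < h
    · exact Or.inl ⟨hx1, hL, hLh⟩
    · right
      have hx3 : r⁻¹ • (x - x0) ∈ Metric.closedBall (0 : EuclideanSpace ℝ (Fin n)) 1 := by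
        rw [Metric.mem_closedBall, dist_eq_norm] at hx1
        rw [mem_closedBall_zero_iff, norm_smul, Real.norm_eq_abs, abs_of_pos (by positivity),
          inv_mul_le_iff₀ hr0]
        linarith
      obtain ⟨c, hc, hxc⟩ := Set.mem_iUnion₂.1 (hcov hx3)
      refine Set.mem_iUnion₂.2 ⟨c, by rw [hF']; simpa using hc, hx1, ?_, not_lt.1 hLh, hx2⟩
      rw [Metric.mem_ball, dist_eq_norm] at hxc ⊢
      have e : x - (x0 + r • c) = r • (r⁻¹ • (x - x0) - c) := by
        rw [smul_sub, smul_smul, mul_inv_cancel₀ hr0.ne', one_smul]; abel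
      rw [e, norm_smul, Real.norm_eq_abs, abs_of_pos hr0]
      calc r * ‖r⁻¹ • (x - x0) - c‖ < r * (κ * t / 2) := by gcongr
        _ = κ * h / 2 := by rw [← hrh]; ring
  refine (measure_mono hcover).trans ((measure_union_le _ _).trans ?_)
  have hb1 : volume (⋃ c ∈ F', P c) ≤ ENNReal.ofReal (μ / 2 * r ^ n) := by
    refine (measure_biUnion_finset_le F' P).trans ((Finset.sum_le_sum fun c _ => hPv c).trans ?_)
    rw [Finset.sum_const, nsmul_eq_mul, ← ENNReal.ofReal_natCast, ← ENNReal.ofReal_mul (by positivity)]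
    refine ENNReal.ofReal_le_ofReal ?_
    have e : (κ * h) ^ n = (κ * t) ^ n * r ^ n := by rw [← hrh, ← mul_pow]; ring
    rw [e]
    have e2 : (F'.card : ℝ) * (η * ((κ * t) ^ n * r ^ n)) =
        (F'.card : ℝ) / (F'.card + 1) * (μ / 2 * r ^ n) := by
      rw [hη]; field_simp
    rw [e2]
    refine mul_le_of_le_one_left (by positivity) ?_
    rw [div_le_one (by positivity)]; linarith
  have hb2 := slab_vol hn x0 hr0.le hh0.le
  have e3 : (2 * r) ^ (n - 1) * h = μ / 2 * r ^ n := by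
    obtain ⟨k, rfl⟩ : ∃ k, n = k + 1 := ⟨n - 1, by omega⟩
    rw [← hrh, ht, Nat.add_sub_cancel, mul_pow, pow_succ, pow_succ]
    field_simp
  rw [e3] at hb2
  refine (add_le_add hb2 hb1).trans ?_
  rw [← ENNReal.ofReal_add (by positivity) (by positivity)]
  refine ENNReal.ofReal_le_ofReal (le_of_eq ?_)
  ring

end CBH

namespace CBH
variable {n : ℕ}

lemma ept_mem (hn : 1 ≤ n) : ept n hn ∈ halfBall n hn 2 :=
  ⟨by rw [ept_norm]; norm_num, by rw [ept_lastC]; norm_num⟩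

lemma growth_sol (hn : 1 ≤ n) {lam Lam s a D : ℝ} (hlam : 0 < lam) (hLam : lam ≤ Lam) (hs : 0 < s)
    (ha : 0 < a) (hD : 1 ≤ D) : ∃ μ > 0, ∃ R0 > 0, ∀ (b u : EuclideanSpace ℝ (Fin n) → ℝ),
      Sol n hn lam Lam s a b u → ∀ (x0 : EuclideanSpace ℝ (Fin n)) (r M : ℝ), 0 < r → r ≤ R0 →
      0 < M → Metric.closedBall x0 r ⊆ Metric.ball 0 2 → M ≤ u x0 →
      (volume {x | x ∈ Metric.closedBall x0 r ∧ M / 2 < u x}).toReal ≤ μ * r ^ n →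
      ∃ x ∈ Metric.closedBall x0 r, D * M < u x := by
  obtain ⟨μ, hμ, ε, hε, hg⟩ := growth n hlam hLam hD
  obtain ⟨R0, hR0, hdr⟩ := small_drift (n := n) hn hs ha hε
  refine ⟨μ, hμ, R0, hR0, fun b u hS x0 r M hr hrR hM hsub hMu hvol => ?_⟩
  have hhb : ∀ x ∈ Metric.closedBall x0 r, M / 2 < u x → x ∈ halfBall n hn 2 := by
    intro x hx hux
    refine ⟨by simpa using hsub hx, ?_⟩
    by_contra hcon
    rw [hS.zero x (not_lt.1 hcon)] at hux
    linarith
  refine hg u b x0 r M hr hM (hS.cont.mono hsub) hMu (fun x hx hux => ?_) ?_ hvol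
  · exact ⟨hS.bnn x (hhb x hx hux), hS.sub x (hhb x hx hux)⟩
  · refine (hS.drift _ x0 r hr (fun x hx => hx.1) (fun x hx => hhb x hx.1 hx.2)).trans
      (ENNReal.ofReal_le_ofReal (hdr r hr hrR))

lemma carleson (hn : 1 ≤ n) {lam Lam s a : ℝ} (hlam : 0 < lam) (hLam : lam ≤ Lam) (hs : 0 < s)
    (ha : 0 < a) : ∃ C ≥ 1, ∀ (b u : EuclideanSpace ℝ (Fin n) → ℝ), Sol n hn lam Lam s a b u →
      ∀ x, ‖x‖ ≤ 5 / 4 → u x ≤ C * u (ept n hn) := by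
  obtain ⟨θ, hθ0, hθ1, T, hT, hsm⟩ := smallMeas hn hlam hLam hs ha
  obtain ⟨μ, hμ, R0, hR0, hg⟩ := growth_sol (D := T) hn hlam hLam hs ha (by linarith)
  obtain ⟨t, ht, C1, hC1, hsm⟩ := hsm μ hμ
  have hθ' : 0 < 1 - θ := by linarith
  obtain ⟨m0, hm0⟩ := exists_pow_lt_of_lt_one
    (show 0 < min R0 ((1 - θ) / 4) * t by positivity) hθ1
  have hr1 : θ ^ m0 / t ≤ R0 := by
    rw [div_le_iff₀ ht]
    exact hm0.le.trans (mul_le_mul_of_nonneg_right (min_le_left _ _) ht.le)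
  have hr2 : θ ^ m0 / t ≤ (1 - θ) / 4 := by
    rw [div_le_iff₀ ht]
    exact hm0.le.trans (mul_le_mul_of_nonneg_right (min_le_right _ _) ht.le)
  have hT0 : 0 < T := by linarith
  refine ⟨max 1 (C1 * T ^ m0), le_max_left _ _, fun b u hS x hx => ?_⟩
  have hue := hS.pos _ (ept_mem hn)
  suffices hsuf : u x ≤ C1 * T ^ m0 * u (ept n hn) from
    hsuf.trans (mul_le_mul_of_nonneg_right (le_max_right _ _) hue.le)
  by_contra hcon
  push Not at hcon
  have hM0 : 0 < C1 * T ^ m0 * u (ept n hn) := by positivity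
  have key : ∀ k : ℕ, ∃ y : EuclideanSpace ℝ (Fin n), ‖y‖ ≤ 5 / 4 + 1 / 4 * (1 - θ ^ k) ∧
      T ^ k * (C1 * T ^ m0 * u (ept n hn)) ≤ u y := by
    intro k
    induction k with
    | zero => exact ⟨x, by simpa using hx, by simpa using hcon.le⟩
    | succ k ih =>
      obtain ⟨y, hy, huy⟩ := ih
      have hr3 : θ ^ (m0 + k) / t ≤ θ ^ k * ((1 - θ) / 4) := by
        rw [pow_add, mul_comm, mul_div_assoc]
        exact mul_le_mul_of_nonneg_left hr2 (by positivity)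
      have hr4 : θ ^ (m0 + k) / t ≤ R0 := by
        refine le_trans ?_ hr1
        exact div_le_div_of_nonneg_right
          (pow_le_pow_of_le_one hθ0.le hθ1.le (by omega)) ht.le
      have hrp : 0 < θ ^ (m0 + k) / t := by positivity
      have hnew : ∀ p ∈ Metric.closedBall y (θ ^ (m0 + k) / t),
          ‖p‖ ≤ 5 / 4 + 1 / 4 * (1 - θ ^ (k + 1)) := by
        intro p hp
        rw [Metric.mem_closedBall, dist_eq_norm] at hp
        have h1 : ‖p‖ ≤ ‖p - y‖ + ‖y‖ := by simpa using norm_add_le (p - y) y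
        rw [pow_succ]
        linarith
      have hk1 : 0 < θ ^ (k + 1) := by positivity
      have hsub : Metric.closedBall y (θ ^ (m0 + k) / t) ⊆ Metric.closedBall 0 (3 / 2) := by
        intro p hp
        rw [mem_closedBall_zero_iff]
        have := hnew p hp
        linarith
      have hv := hsm b u hS (m0 + k) y (T ^ k * (C1 * T ^ m0 * u (ept n hn))) hsub
        (le_of_eq (by rw [pow_add]; ring))
      obtain ⟨p, hp, hup⟩ := hg b u hS y (θ ^ (m0 + k) / t)
        (T ^ k * (C1 * T ^ m0 * u (ept n hn))) hrp hr4 (by positivity)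
        (hsub.trans (Metric.closedBall_subset_ball (by norm_num))) huy
        (ENNReal.toReal_le_of_le_ofReal (by positivity) hv)
      refine ⟨p, hnew p hp, ?_⟩
      rw [pow_succ']
      linarith
  have hcomp : IsCompact (u '' Metric.closedBall 0 (3 / 2)) :=
    (isCompact_closedBall _ _).image_of_continuousOn
      (hS.cont.mono (Metric.closedBall_subset_ball (by norm_num)))
  obtain ⟨B, hB⟩ := hcomp.bddAbove
  obtain ⟨k, hk⟩ := pow_unbounded_of_one_lt (B / (C1 * T ^ m0 * u (ept n hn)))
    (show 1 < T by linarith)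
  rw [div_lt_iff₀ hM0] at hk
  obtain ⟨y, hy, huy⟩ := key k
  have hk1 : 0 < θ ^ k := by positivity
  have := hB ⟨y, by rw [mem_closedBall_zero_iff]; linarith, rfl⟩
  linarith

lemma interior_lower (hn : 1 ≤ n) {lam Lam s a : ℝ} (hlam : 0 < lam) (hLam : lam ≤ Lam) (hs : 0 < s)
    (ha : 0 < a) {τ : ℝ} (hτ : 0 < τ) : ∃ c > 0, ∀ (b u : EuclideanSpace ℝ (Fin n) → ℝ),
      Sol n hn lam Lam s a b u → ∀ y, ‖y‖ ≤ 3 / 2 → τ ≤ lastC n hn y →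
      c * u (ept n hn) ≤ u y := by
  obtain ⟨C, hC, hcar⟩ := carleson hn hlam hLam hs ha
  obtain ⟨μ, hμ, R1, hR1, hg⟩ := growth_sol (D := C) hn hlam hLam hs ha hC
  obtain ⟨R2, hR2, hw⟩ := weakH_sol hn hlam hLam hs ha
  obtain ⟨T', hT', hw⟩ := hw μ hμ
  obtain ⟨R3, hR3, T, hT, hstep⟩ := chain_step hn hlam hLam hs ha
  set ρ := min (min R1 R2) (min R3 (min (1 / 16) (τ / 8))) with hρ
  have hρ0 : 0 < ρ := by positivity
  have hρ1 : ρ ≤ R1 := (min_le_left _ _).trans (min_le_left _ _)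
  have hρ2 : ρ ≤ R2 := (min_le_left _ _).trans (min_le_right _ _)
  have hρ3 : ρ ≤ R3 := (min_le_right _ _).trans (min_le_left _ _)
  have hρ4 : ρ ≤ 1 / 16 := (min_le_right _ _).trans ((min_le_right _ _).trans (min_le_left _ _))
  have hρ5 : ρ ≤ τ / 8 := (min_le_right _ _).trans ((min_le_right _ _).trans (min_le_right _ _))
  obtain ⟨N, hN⟩ := exists_nat_ge (6 / ρ)
  rw [div_le_iff₀ hρ0] at hN
  have hT0 : 0 < T := by linarith
  have hT'0 : 0 < T' := by linarith
  refine ⟨1 / (2 * T' * T ^ N), by positivity, fun b u hS y hy hyL => ?_⟩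
  have hue := hS.pos _ (ept_mem hn)
  have heL := ept_lastC hn
  have heN := ept_norm hn
  have hsub4 : Metric.closedBall (ept n hn) (4 * ρ) ⊆ halfBall n hn 2 :=
    ball_sub_half hn (h := 1 / 2) (by rw [heN]; norm_num) heL.ge (by linarith) (by linarith)
  have hsub1 : Metric.closedBall (ept n hn) ρ ⊆ halfBall n hn 2 :=
    (Metric.closedBall_subset_closedBall (by linarith)).trans hsub4
  have hvol : μ * ρ ^ n < (volume {x | x ∈ Metric.closedBall (ept n hn) ρ ∧
      u (ept n hn) / 2 < u x}).toReal := by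
    by_contra hcon
    obtain ⟨p, hp, hup⟩ := hg b u hS (ept n hn) ρ (u (ept n hn)) hρ0 hρ1 hue
      (fun x hx => by simpa using (hsub1 hx).1) le_rfl (not_lt.1 hcon)
    refine absurd (hcar b u hS p ?_) (not_le.2 hup)
    rw [Metric.mem_closedBall, dist_eq_norm] at hp
    have h1 : ‖p‖ ≤ ‖p - ept n hn‖ + ‖ept n hn‖ := by simpa using norm_add_le (p - ept n hn) (ept n hn)
    linarith
  have hlow : ∀ x ∈ Metric.closedBall (ept n hn) ρ, u (ept n hn) / (2 * T') < u x := by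
    intro x hx
    by_contra hcon
    have h1 := hw b u hS (ept n hn) x ρ (u (ept n hn) / (2 * T')) hρ0 hρ2 (by positivity) hsub4 hx
      (not_lt.1 hcon)
    have e : T' * (u (ept n hn) / (2 * T')) = u (ept n hn) / 2 := by field_simp
    rw [e] at h1
    have := ENNReal.toReal_le_of_le_ofReal (by positivity) h1
    linarith
  have huy : 0 < u y := hS.pos y ⟨by linarith, by linarith⟩
  obtain ⟨x, hx, hux⟩ := chain_seg hn hT (hstep b u hS) (p := y) (q := ept n hn) (ρ := ρ)
    (h := min τ (1 / 2)) (m := u y) hρ0 hρ3 (lt_min (by linarith) (by linarith)) (by linarith) hy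
    (by rw [heN]; norm_num) ((min_le_left _ _).trans hyL) (by rw [heL]; exact min_le_right _ _)
    huy ⟨y, Metric.mem_closedBall_self hρ0.le, le_rfl⟩ hN
  have h1 := (hlow x hx).trans_le hux
  rw [div_lt_iff₀ (by positivity)] at h1
  rw [one_div_mul_eq_div, div_le_iff₀ (by positivity)]
  linarith

end CBH

namespace CBH
variable {n : ℕ}

lemma Sup.add_cmul {lam Lam b β α β' α' c : ℝ} {w f : EuclideanSpace ℝ (Fin n) → ℝ}
    {x : EuclideanSpace ℝ (Fin n)} (h : Sup n lam Lam b β α w x) (hb : 0 ≤ b)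
    (hf : ContDiffAt ℝ 2 f x) (h1 : |c| * ‖fderiv ℝ f x‖ ≤ β')
    (h2 : ∀ A, Adm n lam Lam A → c * (A * hess n f x).trace ≤ α') :
    Sup n lam Lam b (β + β') (α + α') (fun y => w y + c * f y) x := by
  refine h.add hb (contDiffAt_const.mul hf) ?_ ?_
  · rw [fderiv_const_mul (hf.differentiableAt (by norm_num)), norm_smul, Real.norm_eq_abs]
    exact h1
  · intro A hA
    rw [hess_const_mul c hf, Matrix.mul_smul, Matrix.trace_smul, smul_eq_mul]
    exact h2 A hA

lemma coord_sq_fderiv_norm (x : EuclideanSpace ℝ (Fin n)) (k : Fin n) :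
    ‖fderiv ℝ (fun y : EuclideanSpace ℝ (Fin n) => (y k) ^ 2) x‖ ≤ 2 * |x k| := by
  have h := ((coord_hasFDerivAt x k).pow 2).fderiv
  rw [h, norm_smul]
  have := proj_norm_le (n := n) k
  simp only [Nat.cast_ofNat, Nat.add_one_sub_one, pow_one, nsmul_eq_mul, norm_mul,
    Real.norm_eq_abs, abs_two]
  exact mul_le_of_le_one_right (by positivity) this

/-- Half ball of radius `r` about `z`. -/
def HK (n : ℕ) (hn : 1 ≤ n) (z : EuclideanSpace ℝ (Fin n)) (r : ℝ) :
    Set (EuclideanSpace ℝ (Fin n)) := {x | ‖x - z‖ ≤ r ∧ 0 ≤ lastC n hn x}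

lemma HK_compact (hn : 1 ≤ n) (z : EuclideanSpace ℝ (Fin n)) (r : ℝ) : IsCompact (HK n hn z r) := by
  have : HK n hn z r = Metric.closedBall z r ∩ {x | 0 ≤ lastC n hn x} := by
    ext x; simp [HK, dist_eq_norm]
  rw [this]
  exact (isCompact_closedBall z r).inter_right (isClosed_le continuous_const (lastC_cont hn))

lemma HK_norm (hn : 1 ≤ n) {z : EuclideanSpace ℝ (Fin n)} {r : ℝ} (hz : ‖z‖ ≤ 1) (hr : r ≤ 1 / 4)
    {x : EuclideanSpace ℝ (Fin n)} (hx : x ∈ HK n hn z r) : ‖x‖ ≤ 5 / 4 := by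
  have h1 : ‖x‖ ≤ ‖x - z‖ + ‖z‖ := by simpa using norm_add_le (x - z) z
  linarith [hx.1]

lemma HK_last (hn : 1 ≤ n) {z : EuclideanSpace ℝ (Fin n)} {r : ℝ} (hz : lastC n hn z = 0)
    {x : EuclideanSpace ℝ (Fin n)} (hx : x ∈ HK n hn z r) : lastC n hn x ≤ r := by
  have := (abs_le.1 ((lastC_sub_le hn x z).trans hx.1)).2
  linarith

/-- Half of a solution: supersolution property, nonnegative on the flat boundary. -/
structure HSol (n : ℕ) (hn : 1 ≤ n) (lam Lam s a : ℝ) (b v : EuclideanSpace ℝ (Fin n) → ℝ) :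
    Prop where
  cont : ContinuousOn v (Metric.ball 0 2)
  zero : ∀ x, lastC n hn x = 0 → v x = 0
  bnn : ∀ x ∈ halfBall n hn 2, 0 ≤ b x
  sup : ∀ x ∈ halfBall n hn 2, Sup n lam Lam (b x) 0 0 v x
  drift : ∀ (S : Set (EuclideanSpace ℝ (Fin n))) (y : EuclideanSpace ℝ (Fin n)) (R : ℝ), 0 < R →
    S ⊆ Metric.closedBall y R → S ⊆ halfBall n hn 2 →
    (∫⁻ x in S, ENNReal.ofReal (b x ^ n)) ≤ ENNReal.ofReal ((s * R ^ a) ^ n)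

lemma oneStep (hn : 1 ≤ n) {lam Lam s a : ℝ} (hlam : 0 < lam) (hLam : lam ≤ Lam) (hs : 0 < s)
    (ha : 0 < a) : ∃ G ≥ 1, ∃ C > 0, ∃ R0 > 0, ∀ (b v : EuclideanSpace ℝ (Fin n) → ℝ),
      HSol n hn lam Lam s a b v → ∀ (z : EuclideanSpace ℝ (Fin n)) (r A δ : ℝ), 0 < r →
      r ≤ R0 → r ≤ 1 / 4 → 0 ≤ δ → ‖z‖ ≤ 1 → lastC n hn z = 0 →
      (∀ x ∈ HK n hn z r, A * lastC n hn x - δ ≤ v x) →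
      ∀ x ∈ HK n hn z r, A * lastC n hn x - δ * (‖x - z‖ ^ 2 / r ^ 2 + 2 * G * lastC n hn x / r) -
        2 * r * (C * (s * r ^ a) * (|A| + 6 * G * δ / r)) ≤ v x := by
  obtain ⟨C, hC, ε, hε, habp⟩ := abp n (Lam := Lam) hlam
  obtain ⟨R0, hR0, hdr⟩ := small_drift (n := n) hn hs ha hε
  have hn0 : (0 : ℝ) < n := by exact_mod_cast hn
  have hn1 : (1 : ℝ) ≤ n := by exact_mod_cast hn
  set G := n * Lam / lam with hG
  have hLam0 : 0 < Lam := by linarith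
  have hG1 : 1 ≤ G := by rw [hG, le_div_iff₀ hlam]; nlinarith
  have hGl : G * lam = n * Lam := by rw [hG]; field_simp
  refine ⟨G, hG1, C ^ (1 / (n : ℝ)), by positivity, R0, hR0, ?_⟩
  intro b v hS z r A δ hr hrR hr4 hδ hz hzL hlow x0 hx0
  set k : Fin n := ⟨n - 1, by omega⟩ with hk
  have hkl : ∀ x : EuclideanSpace ℝ (Fin n), x k = lastC n hn x := fun x => rfl
  set W : EuclideanSpace ℝ (Fin n) → ℝ := fun x => v x + (-A) * x k +
    (δ / r ^ 2) * ‖x - z‖ ^ 2 + (-(δ * G / r ^ 2)) * (x k) ^ 2 + (δ * 2 * G / r) * x k with hW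
  have hφ : ∀ x ∈ HK n hn z r, 0 ≤ 2 * G * x k / r - G * (x k) ^ 2 / r ^ 2 := by
    intro x hx
    have h1 : 0 ≤ x k := hx.2
    have h2 : x k ≤ r := HK_last hn hzL hx
    have e : 2 * G * x k / r - G * (x k) ^ 2 / r ^ 2 = G * x k * (2 * r - x k) / r ^ 2 := by
      field_simp
    rw [e]
    have : 0 ≤ 2 * r - x k := by linarith
    positivity
  have hWe : ∀ x, W x = v x - A * x k + δ * (‖x - z‖ ^ 2 / r ^ 2 +
      (2 * G * x k / r - G * (x k) ^ 2 / r ^ 2)) := by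
    intro x; rw [hW]; ring
  have hWneg : ∀ x ∈ HK n hn z r, W x < 0 → ‖x - z‖ < r ∧ 0 < lastC n hn x := by
    intro x hx hWx
    rw [hWe] at hWx
    have hφx := hφ x hx
    constructor
    · by_contra hcon
      have e : ‖x - z‖ = r := le_antisymm hx.1 (not_lt.1 hcon)
      rw [e, div_self (by positivity)] at hWx
      have := hlow x hx
      rw [← hkl] at this
      nlinarith [mul_nonneg hδ hφx]
    · by_contra hcon
      have e : lastC n hn x = 0 := le_antisymm (not_lt.1 hcon) hx.2
      rw [hS.zero x e] at hWx
      rw [← hkl] at e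
      rw [e, mul_zero, sub_zero, zero_add] at hWx
      rw [e] at hφx
      have : 0 ≤ ‖x - z‖ ^ 2 / r ^ 2 := by positivity
      nlinarith [mul_nonneg hδ (add_nonneg this hφx)]
  have hhalf : ∀ x ∈ HK n hn z r, 0 < lastC n hn x → x ∈ halfBall n hn 2 := by
    intro x hx hx2
    refine ⟨?_, hx2⟩
    have := HK_norm hn hz hr4 hx
    linarith
  have hWc : ContinuousOn W (HK n hn z r) := by
    have hv : ContinuousOn v (HK n hn z r) := hS.cont.mono fun x hx => by
      rw [mem_ball_zero_iff]; have := HK_norm hn hz hr4 hx; linarith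
    rw [hW]
    fun_prop
  set β := |A| + 6 * G * δ / r with hβ
  have hβ0 : 0 ≤ β := by positivity
  have hsr : 0 < s * r ^ a := by positivity
  have hmain : ∀ m > 0, W x0 ≤ -m → m ≤ 2 * r * (C ^ (1 / (n : ℝ)) * (s * r ^ a) * β) := by
    intro m hm hWm
    have h := habp (HK n hn z r) ∅ W b (2 * r) m 0 β ((s * r ^ a) ^ n) x0 (HK_compact hn z r)
      MeasurableSet.empty hWc (by positivity) hm le_rfl hβ0 (by positivity) (hdr r hr hrR)
      (fun x hx y hy => ?_) (fun x hx hWx => ?_) ?_ hx0 hWm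
    · rw [zero_pow (by omega), zero_mul, zero_add] at h
      have e : C * (β ^ n * (s * r ^ a) ^ n) = (C ^ (1 / (n : ℝ)) * (s * r ^ a) * β) ^ n := by
        have hCn : (C ^ (1 / (n : ℝ))) ^ n = C := by
          rw [← Real.rpow_natCast, ← Real.rpow_mul hC.le, one_div_mul_cancel hn0.ne', Real.rpow_one]
        rw [mul_pow _ β, mul_pow (C ^ (1 / (n : ℝ))), hCn]
        ring
      rw [e] at h
      have := le_of_pow_le_pow_left₀ (by omega) (by positivity) h
      rw [div_le_iff₀ (by positivity)] at this
      linarith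
    · exact diam_closedBall_le (x := x) (y := y) (by simpa [dist_eq_norm] using hx.1)
        (by simpa [dist_eq_norm] using hy.1)
    · obtain ⟨h1, h2⟩ := hWneg x hx hWx
      have hxh := hhalf x hx h2
      have hb := hS.bnn x hxh
      refine ⟨?_, hb, ?_⟩
      · rw [mem_interior]
        refine ⟨{x | ‖x - z‖ < r} ∩ {x | 0 < lastC n hn x}, fun y hy => ⟨le_of_lt hy.1, le_of_lt hy.2⟩, ?_,
          ⟨h1, h2⟩⟩
        exact (isOpen_lt (by fun_prop) continuous_const).inter
          (isOpen_lt continuous_const (lastC_cont hn))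
      · have hxk0 : 0 ≤ x k := hx.2
        have hxk : x k ≤ r := HK_last hn hzL hx
        have hco := coord_fderiv_norm x k
        have s1 := (hS.sup x hxh).add_cmul (c := -A) hb (coord_contDiff x k) (β' := |A|) (α' := 0)
          (by rw [abs_neg]; exact mul_le_of_le_one_right (abs_nonneg _) hco)
          (fun A' _ => by rw [hess_coord]; simp)
        have s2 := s1.add_cmul (c := δ / r ^ 2) hb (sqd_contDiff z x) (β' := δ / r ^ 2 * (2 * r))
          (α' := δ / r ^ 2 * (2 * (n * Lam)))
          (by
            rw [abs_of_nonneg (by positivity)]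
            refine mul_le_mul_of_nonneg_left ((sqd_fderiv_norm z x).trans ?_) (by positivity)
            linarith)
          (fun A' hA' => by
            rw [hess_sqd, Matrix.mul_smul, Matrix.trace_smul, smul_eq_mul, Matrix.mul_one]
            refine mul_le_mul_of_nonneg_left ?_ (by positivity)
            have := hA'.trace_le
            linarith)
        have s3 := s2.add_cmul (c := -(δ * G / r ^ 2)) hb ((coord_contDiff x k).pow 2)
          (β' := δ * G / r ^ 2 * (2 * r)) (α' := -(δ * G / r ^ 2 * (2 * lam)))
          (by
            rw [abs_neg, abs_of_nonneg (by positivity)]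
            refine mul_le_mul_of_nonneg_left ((coord_sq_fderiv_norm x k).trans ?_) (by positivity)
            rw [abs_of_nonneg hxk0]; linarith)
          (fun A' hA' => by
            rw [hess_coord_sq, Matrix.mul_smul, Matrix.trace_smul, smul_eq_mul, neg_mul, neg_le_neg_iff]
            refine mul_le_mul_of_nonneg_left ?_ (by positivity)
            have := hA'.vec_single k
            linarith)
        have s4 := s3.add_cmul (c := δ * 2 * G / r) hb (coord_contDiff x k)
          (β' := δ * 2 * G / r) (α' := 0)
          (by rw [abs_of_nonneg (by positivity)]; exact mul_le_of_le_one_right (by positivity) hco)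
          (fun A' _ => by rw [hess_coord]; simp)
        refine s4.mono hb ?_ ?_
        · have e : (0 + |A| + δ / r ^ 2 * (2 * r) + δ * G / r ^ 2 * (2 * r) + δ * 2 * G / r : ℝ) =
              |A| + (2 + 4 * G) * (δ / r) := by field_simp; ring
          rw [e, hβ]
          have : (2 + 4 * G) * (δ / r) ≤ (6 * G) * (δ / r) :=
            mul_le_mul_of_nonneg_right (by linarith) (by positivity)
          have e2 : 6 * G * δ / r = (6 * G) * (δ / r) := by ring
          linarith
        · have e : (0 + 0 + δ / r ^ 2 * (2 * (n * Lam)) + -(δ * G / r ^ 2 * (2 * lam)) + 0 : ℝ) =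
              2 * δ / r ^ 2 * (n * Lam - G * lam) := by ring
          rw [e, hGl]; simp
    · refine hS.drift _ z r hr (fun x hx => ?_) (fun x hx => ?_)
      · rw [Metric.mem_closedBall, dist_eq_norm]; exact hx.1.1
      · exact hhalf x hx.1 (hWneg x hx.1 hx.2).2
  have hfin : -(2 * r * (C ^ (1 / (n : ℝ)) * (s * r ^ a) * β)) ≤ W x0 := by
    by_cases hneg : W x0 < 0
    · have := hmain (-W x0) (by linarith) (by linarith)
      linarith
    · have : 0 ≤ 2 * r * (C ^ (1 / (n : ℝ)) * (s * r ^ a) * β) := by positivity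
      linarith
  rw [hWe] at hfin
  rw [← hkl]
  have hGx : 0 ≤ δ * (G * (x0 k) ^ 2 / r ^ 2) := by positivity
  nlinarith

end CBH

namespace CBH
variable {n : ℕ}

lemma flat_iter (hn : 1 ≤ n) {lam Lam s a : ℝ} (hlam : 0 < lam) (hLam : lam ≤ Lam) (hs : 0 < s)
    (ha : 0 < a) (ha1 : a < 1) : ∃ r0 > 0, r0 ≤ 1 / 4 ∧ ∃ δ0 > 0,
      ∀ (b v : EuclideanSpace ℝ (Fin n) → ℝ),
      HSol n hn lam Lam s a b v → ∀ (z : EuclideanSpace ℝ (Fin n)) (A : ℝ),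
      ‖z‖ ≤ 1 → lastC n hn z = 0 →
      (∀ x ∈ HK n hn z r0, A * lastC n hn x - |A| * δ0 * r0 ≤ v x) →
      ∀ x, ‖x - z‖ = lastC n hn x → 0 < lastC n hn x → lastC n hn x ≤ r0 →
        (A - |A| / 2) * lastC n hn x ≤ v x := by
  obtain ⟨G, hG, C, hC, R0, hR0, hone⟩ := oneStep hn hlam hLam hs ha
  set ρ : ℝ := (1 / 2) ^ (1 / (1 - a)) with hρ
  have ha1' : 0 < 1 - a := by linarith
  have hρ0 : 0 < ρ := by positivity
  have hρ1 : ρ < 1 := Real.rpow_lt_one (by norm_num) (by norm_num) (by positivity)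
  set ϑ := ρ ^ a with hϑ
  have hϑ0 : 0 < ϑ := by positivity
  have hϑ1 : ϑ < 1 := Real.rpow_lt_one hρ0.le hρ1 ha
  have hρϑ : ρ = ϑ / 2 := by
    have h1 : ρ ^ (1 - a) = 1 / 2 := by
      rw [hρ, ← Real.rpow_mul (by norm_num), one_div_mul_cancel ha1'.ne', Real.rpow_one]
    have h2 : ρ = ρ ^ a * ρ ^ (1 - a) := by
      rw [← Real.rpow_add hρ0, add_sub_cancel, Real.rpow_one]
    rw [h1] at h2
    rw [hϑ]; linarith
  have hG0 : 0 < G := by linarith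
  have hϑ' : 0 < 1 - ϑ := by linarith
  set δ0 := min (ρ / 4) ((1 - ϑ) / (8 * G)) with hδ0
  have hδ00 : 0 < δ0 := by positivity
  have hδ1 : δ0 ≤ ρ / 4 := min_le_left _ _
  have hδ2 : 2 * G * δ0 ≤ (1 - ϑ) / 4 := by
    have : δ0 ≤ (1 - ϑ) / (8 * G) := min_le_right _ _
    rw [le_div_iff₀ (by positivity)] at this
    linarith
  set X := δ0 * ϑ * ρ / (2 * (2 * C * s * (2 + 6 * G * δ0))) with hX
  have hX0 : 0 < X := by positivity
  set r0 := min (1 / 4) (min R0 (X ^ (1 / a))) with hr0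
  have hr00 : 0 < r0 := by positivity
  have hr1 : r0 ≤ 1 / 4 := min_le_left _ _
  have hr2 : r0 ≤ R0 := (min_le_right _ _).trans (min_le_left _ _)
  have hr3 : r0 ^ a ≤ X := by
    calc r0 ^ a ≤ (X ^ (1 / a)) ^ a :=
          Real.rpow_le_rpow hr00.le ((min_le_right _ _).trans (min_le_right _ _)) ha.le
      _ = X := by rw [← Real.rpow_mul hX0.le, one_div_mul_cancel ha.ne', Real.rpow_one]
  have hr4 : 2 * C * s * (2 + 6 * G * δ0) * r0 ^ a ≤ δ0 * ϑ * ρ / 2 := by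
    rw [hX, le_div_iff₀ (by positivity)] at hr3
    linarith
  refine ⟨r0, hr00, hr1, δ0, hδ00, ?_⟩
  intro b v hS z A hz hzL h0
  have key : ∀ k : ℕ, ∀ x ∈ HK n hn z (ρ ^ k * r0),
      (A - |A| * (1 / 4) * (1 - ϑ ^ k)) * lastC n hn x - |A| * δ0 * ϑ ^ k * (ρ ^ k * r0) ≤ v x := by
    intro k
    induction k with
    | zero => intro x hx; simpa using h0 x (by simpa using hx)
    | succ k ih =>
      intro x hx
      set r := ρ ^ k * r0 with hr
      have hrp : 0 < r := by positivity
      have hρk : ρ ^ k ≤ 1 := pow_le_one₀ hρ0.le hρ1.le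
      have hrr : r ≤ r0 := mul_le_of_le_one_left hr00.le hρk
      have hr' : ρ ^ (k + 1) * r0 = ρ * r := by rw [hr, pow_succ]; ring
      rw [hr'] at hx ⊢
      have hϑk0 : 0 < ϑ ^ k := by positivity
      have hϑk1 : ϑ ^ k ≤ 1 := pow_le_one₀ hϑ0.le hϑ1.le
      set Ak := A - |A| * (1 / 4) * (1 - ϑ ^ k) with hAk
      have hAk2 : |Ak| ≤ 2 * |A| := by
        rw [hAk]
        refine (abs_sub _ _).trans ?_
        rw [abs_of_nonneg (show 0 ≤ |A| * (1 / 4) * (1 - ϑ ^ k) from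
          mul_nonneg (by positivity) (by linarith))]
        nlinarith [abs_nonneg A, mul_nonneg (abs_nonneg A) hϑk0.le]
      have hxr : x ∈ HK n hn z r := ⟨hx.1.trans (mul_le_of_le_one_left hrp.le hρ1.le), hx.2⟩
      have h := hone b v hS z r Ak (|A| * δ0 * ϑ ^ k * r) hrp (hrr.trans hr2) (hrr.trans hr1)
        (by positivity) hz hzL ih x hxr
      set L := lastC n hn x with hL
      have hL0 : 0 ≤ L := hx.2
      have hra : r ^ a = ϑ ^ k * r0 ^ a := by
        rw [hr, Real.mul_rpow (by positivity) hr00.le, hϑ, ← Real.rpow_natCast, ← Real.rpow_natCast,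
          ← Real.rpow_mul hρ0.le, ← Real.rpow_mul hρ0.le, mul_comm a]
      -- first error term
      have e1 : |A| * δ0 * ϑ ^ k * r * (‖x - z‖ ^ 2 / r ^ 2 + 2 * G * L / r) ≤
          |A| * δ0 * ϑ ^ k * r * ρ ^ 2 + |A| * ϑ ^ k * L * ((1 - ϑ) / 4) := by
        have i1 : ‖x - z‖ ^ 2 / r ^ 2 ≤ ρ ^ 2 := by
          rw [div_le_iff₀ (by positivity), ← mul_pow]
          exact pow_le_pow_left₀ (norm_nonneg _) hx.1 2
        have i2 : |A| * δ0 * ϑ ^ k * r * (2 * G * L / r) = |A| * ϑ ^ k * L * (2 * G * δ0) := by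
          field_simp
        rw [mul_add, i2]
        exact add_le_add (mul_le_mul_of_nonneg_left i1 (by positivity))
          (mul_le_mul_of_nonneg_left hδ2 (by positivity))
      have e2 : 2 * r * (C * (s * r ^ a) * (|Ak| + 6 * G * (|A| * δ0 * ϑ ^ k * r) / r)) ≤
          |A| * ϑ ^ k * r * (δ0 * ϑ * ρ / 2) := by
        have i1 : |Ak| + 6 * G * (|A| * δ0 * ϑ ^ k * r) / r ≤ |A| * (2 + 6 * G * δ0) := by
          have : 6 * G * (|A| * δ0 * ϑ ^ k * r) / r = |A| * (6 * G * δ0) * ϑ ^ k := by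
            field_simp
          rw [this]
          have : |A| * (6 * G * δ0) * ϑ ^ k ≤ |A| * (6 * G * δ0) :=
            mul_le_of_le_one_right (by positivity) hϑk1
          linarith
        calc _ ≤ 2 * r * (C * (s * r ^ a) * (|A| * (2 + 6 * G * δ0))) :=
              mul_le_mul_of_nonneg_left (mul_le_mul_of_nonneg_left i1 (by positivity))
                (by positivity)
          _ = |A| * ϑ ^ k * r * (2 * C * s * (2 + 6 * G * δ0) * r0 ^ a) := by rw [hra]; ring
          _ ≤ _ := mul_le_mul_of_nonneg_left hr4 (by positivity)
      have e3 : |A| * δ0 * ϑ ^ k * r * ρ ^ 2 = |A| * ϑ ^ k * r * (δ0 * ϑ * ρ / 2) := by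
        have : ρ ^ 2 = ϑ / 2 * ρ := by rw [← hρϑ]; ring
        rw [this]; ring
      have e4 : (A - |A| * (1 / 4) * (1 - ϑ ^ (k + 1))) * L = Ak * L - |A| * ϑ ^ k * L * ((1 - ϑ) / 4) := by
        rw [hAk, pow_succ]; ring
      have e5 : |A| * δ0 * ϑ ^ (k + 1) * (ρ * r) = 2 * (|A| * ϑ ^ k * r * (δ0 * ϑ * ρ / 2)) := by
        rw [pow_succ]; ring
      rw [e4, e5]
      rw [e3] at e1
      linarith
  intro x hx hx0 hxr
  set t := lastC n hn x with ht
  obtain ⟨k, hk1, hk2⟩ := exists_nat_pow_near_of_lt_one (x := t / r0) (y := ρ) (by positivity)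
    ((div_le_one hr00).2 hxr) hρ0 hρ1
  rw [lt_div_iff₀ hr00] at hk1
  rw [div_le_iff₀ hr00] at hk2
  have h := key k x ⟨by rw [hx]; exact hk2, hx0.le⟩
  have hϑk0 : 0 < ϑ ^ k := by positivity
  have hϑk1 : ϑ ^ k ≤ 1 := pow_le_one₀ hϑ0.le hϑ1.le
  have i1 : |A| * δ0 * ϑ ^ k * (ρ ^ k * r0) ≤ |A| * t / 4 := by
    calc |A| * δ0 * ϑ ^ k * (ρ ^ k * r0) ≤ |A| * δ0 * 1 * (ρ ^ k * r0) := by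
          refine mul_le_mul_of_nonneg_right ?_ (by positivity)
          exact mul_le_mul_of_nonneg_left hϑk1 (by positivity)
      _ ≤ |A| * (ρ / 4) * 1 * (ρ ^ k * r0) := by
          refine mul_le_mul_of_nonneg_right ?_ (by positivity)
          refine mul_le_mul_of_nonneg_right ?_ (by positivity)
          exact mul_le_mul_of_nonneg_left hδ1 (by positivity)
      _ = |A| / 4 * (ρ ^ (k + 1) * r0) := by rw [pow_succ]; ring
      _ ≤ |A| / 4 * t := mul_le_mul_of_nonneg_left hk1.le (by positivity)
      _ = _ := by ring
  have i2 : (A - |A| * (1 / 4) * (1 - ϑ ^ k)) * lastC n hn x =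
      A * t - |A| * t / 4 + |A| * t / 4 * ϑ ^ k := by rw [← ht]; ring
  have i3 : 0 ≤ |A| * t / 4 * ϑ ^ k := by positivity
  have i4 : (A - |A| / 2) * t = A * t - |A| * t / 4 - |A| * t / 4 := by ring
  rw [i2] at h
  rw [i4]
  linarith

/-- Projection onto the flat boundary. -/
noncomputable def flatP (n : ℕ) (hn : 1 ≤ n) (x : EuclideanSpace ℝ (Fin n)) :
    EuclideanSpace ℝ (Fin n) :=
  x - EuclideanSpace.single (⟨n - 1, by omega⟩ : Fin n) (lastC n hn x)

lemma flatP_last (hn : 1 ≤ n) (x : EuclideanSpace ℝ (Fin n)) : lastC n hn (flatP n hn x) = 0 := by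
  simp [flatP, lastC]

lemma flatP_dist (hn : 1 ≤ n) {x : EuclideanSpace ℝ (Fin n)} (hx : 0 ≤ lastC n hn x) :
    ‖x - flatP n hn x‖ = lastC n hn x := by
  simp [flatP, abs_of_nonneg hx]

lemma flatP_norm (hn : 1 ≤ n) (x : EuclideanSpace ℝ (Fin n)) : ‖flatP n hn x‖ ≤ ‖x‖ := by
  rw [EuclideanSpace.norm_eq, EuclideanSpace.norm_eq]
  refine Real.sqrt_le_sqrt (Finset.sum_le_sum fun i _ => ?_)
  by_cases hi : i = (⟨n - 1, by omega⟩ : Fin n)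
  · subst hi
    have := flatP_last hn x
    rw [lastC] at this
    rw [this]; simp; positivity
  · simp [flatP, hi]

lemma Sol.lower {hn : 1 ≤ n} {lam Lam s a : ℝ} {b u : EuclideanSpace ℝ (Fin n) → ℝ}
    (h : Sol n hn lam Lam s a b u) : HSol n hn lam Lam s a b u :=
  ⟨h.cont, fun x hx => h.zero x hx.le, h.bnn, h.sup, h.drift⟩

lemma Sol.upper {hn : 1 ≤ n} {lam Lam s a : ℝ} {b u : EuclideanSpace ℝ (Fin n) → ℝ}
    (h : Sol n hn lam Lam s a b u) : HSol n hn lam Lam s a b (fun x => -u x) :=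
  ⟨h.cont.neg, fun x hx => by rw [h.zero x hx.le, neg_zero], h.bnn, h.sub, h.drift⟩

lemma final_bounds (hn : 1 ≤ n) {lam Lam s a : ℝ} (hlam : 0 < lam) (hLam : lam ≤ Lam) (hs : 0 < s)
    (ha : 0 < a) (ha1 : a < 1) : ∃ c > 0, ∃ C > 0, ∀ (b u : EuclideanSpace ℝ (Fin n) → ℝ),
      Sol n hn lam Lam s a b u → ∀ x ∈ halfBall n hn 1,
        c * u (ept n hn) * lastC n hn x ≤ u x ∧ u x ≤ C * u (ept n hn) * lastC n hn x := by
  obtain ⟨C, hC, hcar⟩ := carleson hn hlam hLam hs ha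
  obtain ⟨r0, hr0, hr04, δ0, hδ0, hit⟩ := flat_iter hn hlam hLam hs ha ha1
  obtain ⟨c, hc, hdrInt⟩ := interior_lower hn hlam hLam hs ha (τ := δ0 * r0) (by positivity)
  obtain ⟨c', hc', hdrInt'⟩ := interior_lower hn hlam hLam hs ha (τ := r0) hr0
  have hC0 : 0 < C := by linarith
  refine ⟨min (c / (2 * r0)) c', by positivity, max (3 / 2 * (C / (δ0 * r0))) (C / r0),
    by positivity, ?_⟩
  intro b u hS x hx
  have hue := hS.pos _ (ept_mem hn)
  have hL0 := hx.2
  have hL1 : lastC n hn x ≤ 1 := by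
    have h1 : |lastC n hn x| ≤ ‖x‖ := abs_coord_le x _
    have := (abs_le.1 h1).2
    linarith [hx.1]
  set L := lastC n hn x with hL
  have hEL : 0 ≤ u (ept n hn) * L := by positivity
  rw [mul_assoc, mul_assoc]
  have hzn : ‖flatP n hn x‖ ≤ 1 := (flatP_norm hn x).trans hx.1.le
  have hzL := flatP_last hn x
  have hzd := flatP_dist hn hL0.le
  by_cases hcase : L ≤ r0
  · constructor
    · refine (mul_le_mul_of_nonneg_right (min_le_left _ _) hEL).trans ?_
      have hA : 0 < c * u (ept n hn) / r0 := by positivity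
      have := hit b u hS.lower (flatP n hn x) (c * u (ept n hn) / r0) hzn hzL (fun y hy => ?_) x
        hzd hL0 hcase
      · rw [abs_of_pos hA] at this
        calc _ = _ := by ring
          _ ≤ _ := this
      · have hyn := HK_norm hn hzn hr04 hy
        have hyr := HK_last hn hzL hy
        rw [abs_of_pos hA]
        by_cases hyL : δ0 * r0 ≤ lastC n hn y
        · have h1 := hdrInt b u hS y (by linarith) hyL
          have h2 : c * u (ept n hn) / r0 * lastC n hn y ≤ c * u (ept n hn) / r0 * r0 :=
            mul_le_mul_of_nonneg_left hyr hA.le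
          rw [div_mul_cancel₀ _ hr0.ne'] at h2
          have h3 : 0 ≤ c * u (ept n hn) / r0 * δ0 * r0 := by positivity
          linarith
        · have h1 : 0 ≤ u y := by
            rcases eq_or_lt_of_le hy.2 with h | h
            · rw [hS.zero y h.symm.le]
            · exact (hS.pos y ⟨by linarith, h⟩).le
          have h2 : c * u (ept n hn) / r0 * lastC n hn y ≤ c * u (ept n hn) / r0 * (δ0 * r0) :=
            mul_le_mul_of_nonneg_left (le_of_not_ge hyL) hA.le
          linarith
    · refine le_trans ?_ (mul_le_mul_of_nonneg_right (le_max_left _ _) hEL)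
      have hA : 0 < C * u (ept n hn) / (δ0 * r0) := by positivity
      have := hit b _ hS.upper (flatP n hn x) (-(C * u (ept n hn) / (δ0 * r0))) hzn hzL
        (fun y hy => ?_) x hzd hL0 hcase
      · rw [abs_neg, abs_of_pos hA] at this
        have h2 : u x ≤ 3 / 2 * (C * u (ept n hn) / (δ0 * r0)) * L := by linarith
        calc _ ≤ _ := h2
          _ = _ := by ring
      · have h1 := hcar b u hS y (HK_norm hn hzn hr04 hy)
        rw [abs_neg, abs_of_pos hA]
        have h2 : C * u (ept n hn) / (δ0 * r0) * δ0 * r0 = C * u (ept n hn) := by field_simp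
        have h3 : 0 ≤ C * u (ept n hn) / (δ0 * r0) * lastC n hn y := mul_nonneg hA.le hy.2
        rw [h2]
        linarith
  · push Not at hcase
    constructor
    · refine (mul_le_mul_of_nonneg_right (min_le_right _ _) hEL).trans ?_
      have h1 := hdrInt' b u hS x (by linarith [hx.1]) hcase.le
      have h2 : c' * (u (ept n hn) * L) ≤ c' * (u (ept n hn) * 1) := by gcongr
      linarith
    · refine le_trans ?_ (mul_le_mul_of_nonneg_right (le_max_right _ _) hEL)
      have h1 := hcar b u hS x (by linarith [hx.1])
      have h2 : C * u (ept n hn) / r0 * r0 ≤ C * u (ept n hn) / r0 * L := by gcongr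
      rw [div_mul_cancel₀ _ hr0.ne'] at h2
      calc _ ≤ _ := h1.trans h2
        _ = _ := by ring

end CBH

/-- Carleson estimate and boundary Harnack inequality for solutions of the
homogeneous extremal inequalities. -/
theorem carleson_and_boundary_harnack
    (n : ℕ) (hn : 2 ≤ n) (lam Lam : ℝ) (hlam : 0 < lam) (hLam : lam ≤ Lam)
    (q K : ℝ) (hq : (n : ℝ) < q) (hK : 0 < K) :
    ∃ c₁ c₂ c₃ : ℝ, 0 < c₁ ∧ 0 < c₂ ∧ 0 < c₃ ∧
      ∀ b u : EuclideanSpace ℝ (Fin n) → ℝ,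
        ContinuousOn b (halfBall n (by omega) 2) →
        (∀ x ∈ halfBall n (by omega) 2, 0 ≤ b x) →
        LpNormE n q b (halfBall n (by omega) 2) ≤ ENNReal.ofReal K →
        ContinuousOn u (halfBall n (by omega) 2 ∪ flatB n (by omega) 2) →
        ContDiffOn ℝ 2 u (halfBall n (by omega) 2) →
        (∀ x ∈ halfBall n (by omega) 2,
          pucciMinus n lam Lam (hess n u x) - b x * gradNorm n u x ≤ 0) →
        (∀ x ∈ halfBall n (by omega) 2,
          0 ≤ pucciPlus n lam Lam (hess n u x) + b x * gradNorm n u x) →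
        (∀ x ∈ halfBall n (by omega) 2, 0 < u x) →
        (∀ x ∈ flatB n (by omega : 1 ≤ n) 2, u x = 0) →
        ((∀ x ∈ halfBall n (by omega : 1 ≤ n) 1,
            c₁ * u (EuclideanSpace.single (⟨n - 1, by omega⟩ : Fin n) ((1 : ℝ) / 2))
              ≤ u x / lastC n (by omega) x) ∧
          (∀ x ∈ halfBall n (by omega : 1 ≤ n) 1,
            c₂ * u x
              ≤ c₁ * u (EuclideanSpace.single (⟨n - 1, by omega⟩ : Fin n) ((1 : ℝ) / 2))) ∧
          (∀ v : EuclideanSpace ℝ (Fin n) → ℝ,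
            ContinuousOn v (halfBall n (by omega) 2 ∪ flatB n (by omega) 2) →
            ContDiffOn ℝ 2 v (halfBall n (by omega) 2) →
            (∀ x ∈ halfBall n (by omega) 2,
              pucciMinus n lam Lam (hess n v x) - b x * gradNorm n v x ≤ 0) →
            (∀ x ∈ halfBall n (by omega) 2,
              0 ≤ pucciPlus n lam Lam (hess n v x) + b x * gradNorm n v x) →
            (∀ x ∈ halfBall n (by omega) 2, 0 < v x) →
            (∀ x ∈ flatB n (by omega : 1 ≤ n) 2, v x = 0) →
            ∀ x ∈ halfBall n (by omega : 1 ≤ n) 1, ∀ y ∈ halfBall n (by omega : 1 ≤ n) 1,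
              c₃ * (u x / v x) ≤ u y / v y)) := by
  have hn1 : 1 ≤ n := by omega
  have hn0 : (0 : ℝ) < n := by exact_mod_cast hn1
  have hq0 : 0 < q := hn0.trans hq
  have hom := CBH.om_pos n
  have ha : (0 : ℝ) < 1 - n / q := by rw [sub_pos, div_lt_one hq0]; exact hq
  have ha1 : (1 : ℝ) - n / q < 1 := by
    have : (0 : ℝ) < n / q := by positivity
    linarith
  obtain ⟨c, hc, C, hC, hfin⟩ := CBH.final_bounds hn1 hlam hLam
    (s := K * (CBH.om n) ^ ((1 - n / q) / n)) (a := 1 - n / q) (by positivity) ha ha1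
  have hsub : ∀ x ∈ halfBall n hn1 1, x ∈ halfBall n hn1 2 := fun x hx =>
    ⟨by linarith [hx.1], hx.2⟩
  have hmain : ∀ b u : EuclideanSpace ℝ (Fin n) → ℝ,
        ContinuousOn b (halfBall n hn1 2) →
        (∀ x ∈ halfBall n hn1 2, 0 ≤ b x) →
        LpNormE n q b (halfBall n hn1 2) ≤ ENNReal.ofReal K →
        ContinuousOn u (halfBall n hn1 2 ∪ flatB n hn1 2) →
        ContDiffOn ℝ 2 u (halfBall n hn1 2) →
        (∀ x ∈ halfBall n hn1 2,
          pucciMinus n lam Lam (hess n u x) - b x * gradNorm n u x ≤ 0) →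
        (∀ x ∈ halfBall n hn1 2,
          0 ≤ pucciPlus n lam Lam (hess n u x) + b x * gradNorm n u x) →
        (∀ x ∈ halfBall n hn1 2, 0 < u x) →
        (∀ x ∈ flatB n hn1 2, u x = 0) → 0 < u (CBH.ept n hn1) ∧
        ∀ x ∈ halfBall n hn1 1, c * u (CBH.ept n hn1) * lastC n hn1 x ≤ u x ∧
          u x ≤ C * u (CBH.ept n hn1) * lastC n hn1 x := by
    intro b u hb hb0 hbK hu hu2 hm hp hpos hz
    have hS := CBH.sol_of hn1 hLam hq hK hb hb0 hbK hu hu2 hm hp hpos hz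
    refine ⟨hpos _ (CBH.ept_mem hn1), fun x hx => ?_⟩
    have h := hfin b _ hS x hx
    have e1 : CBH.ext0 n hn1 u x = u x := if_pos hx.2
    have e2 : CBH.ext0 n hn1 u (CBH.ept n hn1) = u (CBH.ept n hn1) :=
      if_pos (CBH.ept_mem hn1).2
    rw [e1, e2] at h
    exact h
  refine ⟨c, c / C, (c / C) ^ 2, hc, by positivity, by positivity, ?_⟩
  intro b u hb hb0 hbK hu hu2 hm hp hpos hz
  obtain ⟨hue, hub⟩ := hmain b u hb hb0 hbK hu hu2 hm hp hpos hz
  refine ⟨fun x hx => ?_, fun x hx => ?_, ?_⟩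
  · rw [le_div_iff₀ hx.2]
    exact (hub x hx).1
  · have hL : 0 < lastC n hn1 x := hx.2
    have hL1 : lastC n hn1 x ≤ 1 := by
      have h1 : |lastC n hn1 x| ≤ ‖x‖ := CBH.abs_coord_le x _
      have := (abs_le.1 h1).2
      linarith [hx.1]
    have h1 : u x ≤ C * u (CBH.ept n hn1) :=
      (hub x hx).2.trans (mul_le_of_le_one_right (by positivity) hL1)
    have h2 : c / C * u x ≤ c / C * (C * u (CBH.ept n hn1)) :=
      mul_le_mul_of_nonneg_left h1 (by positivity)
    have h3 : c / C * (C * u (CBH.ept n hn1)) = c * u (CBH.ept n hn1) := by field_simp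
    rw [h3] at h2
    exact h2
  · intro v hv hv2 hvm hvp hvpos hvz x hx y hy
    obtain ⟨hve, hvb⟩ := hmain b v hb hb0 hbK hv hv2 hvm hvp hvpos hvz
    have hLx : 0 < lastC n hn1 x := hx.2
    have hLy : 0 < lastC n hn1 y := hy.2
    obtain ⟨ux1, ux2⟩ := hub x hx
    obtain ⟨uy1, uy2⟩ := hub y hy
    obtain ⟨vx1, vx2⟩ := hvb x hx
    obtain ⟨vy1, vy2⟩ := hvb y hy
    have hvy : 0 < v y := hvpos y (hsub y hy)
    set U := u (CBH.ept n hn1) with hU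
    set V := v (CBH.ept n hn1) with hV
    set Lx := lastC n hn1 x with hLxd
    set Ly := lastC n hn1 y with hLyd
    have h1 : u x / v x ≤ (C * U * Lx) / (c * V * Lx) :=
      div_le_div₀ (by positivity) ux2 (by positivity) vx1
    have h2 : (c * U * Ly) / (C * V * Ly) ≤ u y / v y :=
      div_le_div₀ (by linarith [show 0 < c * U * Ly by positivity]) uy1 hvy vy2
    have h3 : (c / C) ^ 2 * ((C * U * Lx) / (c * V * Lx)) = (c * U * Ly) / (C * V * Ly) := by
      field_simp
    calc (c / C) ^ 2 * (u x / v x) ≤ (c / C) ^ 2 * ((C * U * Lx) / (c * V * Lx)) :=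
          mul_le_mul_of_nonneg_left h1 (by positivity)
      _ = _ := h3
      _ ≤ _ := h2
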